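/- Let N ≥ 1 be an integer, let 0 < s < 1, and suppose N < 10s. Then there is no stable solution u of the fractional Gelfand equation (-Δ)^s u = e^u on ℝ^N; that is, there is no function u ∈ C^{2σ}(ℝ^N) ∩ L_s(ℝ^N) for some σ > s satisfying (-Δ)^s u(x) = e^{u(x)} for every x ∈ ℝ^N together with the stability inequality. -/

import Mathlib

/-!
Write `w = e^{αu}` with `0 < α < 2`, and let `η(x) = (1 + |x|/R)^{-(N+2s)/2}` be a cutoff at
scale `R`.

Testing the stability inequality with `w η` bounds `∫ e^u w² η²` by `c_{N,s}/2` times the energy of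
`w η`. The elementary inequality `(e^t - 1)² ≤ (t/2)(e^{2t} - 1)` for `t ≥ 0`, in the form with
cutoffs `pointwise_ineq`, bounds this energy by `(1 + δ) α/2` times the double integral of
`(u(x) - u(y)) (w²η²(x) - w²η²(y)) |x - y|^{-N-2s}`, plus an error involving only the increments of
`η`. The double integral is, up to the constant, the equation tested with `w² η²`, that is
`∫ e^u w² η²` again. Since `α < 2`, `δ` can be chosen with `(1 + δ) α/2 < 1`, and the term can be
absorbed. The tail of `η` is chosen so that its carré du champ is at most `C R^{-2s} η²`
(`carre_cutEta_scaled`), which leaves `∫ e^u w² η² ≤ C R^{-2s} ∫ w² η²` (`scaled_estimate`). As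
`w² = (e^u)^{2α}`, Young's inequality absorbs the right-hand side and gives
`∫ e^{(2α+1)u} η² ≤ C R^{N - 2s(2α+1)}` (`decay_estimate`). If `N < 10s`, some `α < 2` makes the
exponent negative, and `R → ∞` contradicts the positivity of the left-hand side.

The justification of these steps rests on three facts. A stable solution is bounded above
(`bounded_above`), because stability controls local averages of `e^u` and the Hölder regularity
controls second differences of `u`. The truncated fractional Laplacians of `u` are then bounded
uniformly (`truncLap_bounded`), so that the pointwise principal value equation may be tested with
compactly supported functions (`weak_form`, `tendsto_weak`). Finally stability extends, by
mollification and Fatou's lemma, from `C¹` to continuous test functions of compact support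
(`stability_continuous`); the cutoff `η` is approximated by `max (η - 1/(n+1)) 0`.
-/

open MeasureTheory Filter Set

noncomputable section

/-- Euclidean space `ℝ^N`. -/
abbrev ES (N : ℕ) := EuclideanSpace ℝ (Fin N)

/-- The normalization constant `c_{N,s}` of the fractional Laplacian. -/
def fracC (N : ℕ) (s : ℝ) : ℝ :=
  2 ^ (2 * s) * s * Real.Gamma ((N : ℝ) / 2 + s) /
    (Real.pi ^ ((N : ℝ) / 2) * Real.Gamma (1 - s))

/-- `HasFracLapAt N s u x v` means that the principal-value limit defining
`(-Δ)^s u (x)` exists and equals `v`: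
`(-Δ)^s u (x) = c_{N,s} lim_{ε→0⁺} ∫_{ℝ^N ∖ B(x,ε)} (u x - u ξ)/|x-ξ|^{N+2s} dξ`. -/
def HasFracLapAt (N : ℕ) (s : ℝ) (u : ES N → ℝ) (x : ES N) (v : ℝ) : Prop :=
  Filter.Tendsto
    (fun ε : ℝ => fracC N s *
      ∫ ξ in {ξ : ES N | ε < ‖x - ξ‖}, (u x - u ξ) / ‖x - ξ‖ ^ ((N : ℝ) + 2 * s))
    (nhdsWithin 0 (Set.Ioi 0)) (nhds v)

/-- The weight function `η(x) = (1+|x|²)^{-(N+2s)/2}`. -/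
def fracEta (N : ℕ) (s : ℝ) (x : ES N) : ℝ :=
  (1 + ‖x‖ ^ 2) ^ (-(((N : ℝ) + 2 * s) / 2))

/-- `ρ_m(x) = (1+|x|²)^{-m/2}`. -/
def fracRho (N : ℕ) (m : ℝ) (x : ES N) : ℝ :=
  (1 + ‖x‖ ^ 2) ^ (-(m / 2))

/-- Membership in `L_s(ℝ^N)`: locally integrable with
`∫ |u(x)|/(1+|x|)^{N+2s} dx < ∞`. -/
def MemLs (N : ℕ) (s : ℝ) (u : ES N → ℝ) : Prop :=
  MeasureTheory.LocallyIntegrable u volume ∧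
    MeasureTheory.Integrable
      (fun x : ES N => |u x| / (1 + ‖x‖) ^ ((N : ℝ) + 2 * s)) volume

/-- Membership in the Hölder space `C^β(ℝ^N)` for `0 < β < 2`:
Hölder continuity of exponent `β` if `β ≤ 1`, and a Hölder continuous
derivative of exponent `β - 1` if `β > 1`. -/
def MemCHolder {N : ℕ} (β : ℝ) (u : ES N → ℝ) : Prop :=
  (β ≤ 1 → ∃ C : NNReal, HolderWith C β.toNNReal u) ∧
  (1 < β → Differentiable ℝ u ∧
    ∃ C : NNReal, HolderWith C (β - 1).toNNReal (fderiv ℝ u))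

/-- A solution of `(-Δ)^s u = e^u` on `ℝ^N`: a function
`u ∈ C^{2σ}(ℝ^N) ∩ L_s(ℝ^N)` for some `σ > s` satisfying the equation
pointwise. -/
def IsSolution (N : ℕ) (s : ℝ) (u : ES N → ℝ) : Prop :=
  (∃ σ : ℝ, s < σ ∧ MemCHolder (2 * σ) u) ∧ MemLs N s u ∧
    ∀ x : ES N, HasFracLapAt N s u x (Real.exp (u x))

/-- Stability: `∫ e^u φ² ≤ (c_{N,s}/2) ∬ (φ(x)-φ(y))²/|x-y|^{N+2s}` for all
`φ ∈ C¹_c(ℝ^N)`. -/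
def IsStable (N : ℕ) (s : ℝ) (u : ES N → ℝ) : Prop :=
  ∀ φ : ES N → ℝ, ContDiff ℝ 1 φ → HasCompactSupport φ →
    ∫ x : ES N, Real.exp (u x) * φ x ^ 2 ≤
      fracC N s / 2 *
        ∫ x : ES N, ∫ y : ES N, (φ x - φ y) ^ 2 / ‖x - y‖ ^ ((N : ℝ) + 2 * s)

/-- Surface area `|S^{N-1}| = 2 π^{N/2} / Γ(N/2)` of the unit sphere in `ℝ^N`. -/
def sphArea (N : ℕ) : ℝ :=
  2 * Real.pi ^ ((N : ℝ) / 2) / Real.Gamma ((N : ℝ) / 2)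

/-- The normalization constant `p(N,s)` of the Poisson kernel. -/
def poissonC (N : ℕ) (s : ℝ) : ℝ :=
  Real.Gamma (((N : ℝ) + 2 * s) / 2) / (Real.pi ^ ((N : ℝ) / 2) * Real.Gamma s)

/-- The Poisson kernel `P_s(x,t) = p(N,s) t^{2s} / (|x|²+t²)^{(N+2s)/2}`. -/
def poissonKer (N : ℕ) (s : ℝ) (x : ES N) (t : ℝ) : ℝ :=
  poissonC N s * t ^ (2 * s) / (‖x‖ ^ 2 + t ^ 2) ^ (((N : ℝ) + 2 * s) / 2)

/-- The Caffarelli–Silvestre extension `U(x,t) = ∫ P_s(x-z,t) u(z) dz`. -/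
def csExtension (N : ℕ) (s : ℝ) (u : ES N → ℝ) (x : ES N) (t : ℝ) : ℝ :=
  ∫ z : ES N, poissonKer N s (x - z) t * u z

/-- `ζ(x,t) = (1+|x|²+t²)^{-(N+2s)/4}`. -/
def csZeta (N : ℕ) (s : ℝ) (x : ES N) (t : ℝ) : ℝ :=
  (1 + ‖x‖ ^ 2 + t ^ 2) ^ (-(((N : ℝ) + 2 * s) / 4))

/-- The squared (full) gradient `|∇F|²(x,t) = |∇_x F|² + |∂_t F|²` of a
function `F` on `ℝ^N × ℝ`. -/
def gradSqr (N : ℕ) (F : ES N → ℝ → ℝ) (x : ES N) (t : ℝ) : ℝ :=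
  ‖fderiv ℝ (fun y => F y t) x‖ ^ 2 + (deriv (F x) t) ^ 2

/-! ### Elementary inequalities -/

lemma exp_sub_one_le {t : ℝ} (ht : 0 ≤ t) : Real.exp t - 1 ≤ t / 2 * (Real.exp t + 1) := by
  have hd : ∀ r : ℝ, HasDerivAt (fun r : ℝ => r / 2 * (Real.exp r + 1) - Real.exp r)
      (1 / 2 * (Real.exp r + 1) + r / 2 * Real.exp r - Real.exp r) r := fun r =>
    (((hasDerivAt_id' r).div_const 2).mul ((Real.hasDerivAt_exp r).add_const 1)).sub
      (Real.hasDerivAt_exp r)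
  have hm : Monotone (fun r : ℝ => r / 2 * (Real.exp r + 1) - Real.exp r) := by
    apply monotone_of_deriv_nonneg (fun r => (hd r).differentiableAt)
    intro r
    rw [(hd r).deriv]
    have h1 := Real.add_one_le_exp (-r)
    have h2 : Real.exp (-r) * Real.exp r = 1 := by rw [← Real.exp_add]; simp
    nlinarith [Real.exp_pos r]
  have := hm ht
  simp only [Real.exp_zero] at this
  linarith

/-- The pointwise inequality with one exponential normalised to `1`. The case `p = q` is
`(e^t - 1)² ≤ (t/2)(e^{2t} - 1)`; the parameter `δ` pays for the cross terms. -/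
lemma pointwise_core {δ : ℝ} (hδ : 0 < δ) {t : ℝ} (ht : 0 ≤ t) (p q : ℝ) :
    (Real.exp t * p - q) ^ 2 ≤ (1 + δ) / 2 * t * (Real.exp t ^ 2 * p ^ 2 - q ^ 2) +
      (1 + 2 / δ + (1 + δ) ^ 2 / (2 * δ) + (1 + δ) / 2) * (Real.exp t ^ 2 + 1) * (p - q) ^ 2 := by
  obtain ⟨d, rfl⟩ : ∃ d, q = p + d := ⟨q - p, by ring⟩
  have hE := exp_sub_one_le ht
  have hE1 : t + 1 ≤ Real.exp t := Real.add_one_le_exp t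
  set E := Real.exp t
  have h1 : ((E - 1) * p - d) ^ 2 ≤ (1 + δ / 2) * ((E - 1) ^ 2 * p ^ 2) + (1 + 2 / δ) * d ^ 2 := by
    have : (1 + δ / 2) * ((E - 1) ^ 2 * p ^ 2) + (1 + 2 / δ) * d ^ 2 - ((E - 1) * p - d) ^ 2
        = (δ * (E - 1) * p + 2 * d) ^ 2 / (2 * δ) := by field_simp; ring
    have h : 0 ≤ (δ * (E - 1) * p + 2 * d) ^ 2 / (2 * δ) := by positivity
    linarith
  have h2 : (E - 1) ^ 2 ≤ t / 2 * (E ^ 2 - 1) := by nlinarith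
  have h3 : (1 + δ / 2) * ((E - 1) ^ 2 * p ^ 2) ≤ (1 + δ / 2) * (t / 2 * (E ^ 2 - 1) * p ^ 2) := by
    gcongr
  have h4 : 2 * t ≤ E ^ 2 - 1 := by nlinarith
  have h5 : δ / 4 * (t * (2 * t) * p ^ 2) ≤ δ / 4 * (t * (E ^ 2 - 1) * p ^ 2) := by gcongr
  have h6 : (1 + δ) * t * p * d ≤ δ / 2 * t ^ 2 * p ^ 2 + (1 + δ) ^ 2 / (2 * δ) * d ^ 2 := by
    have : δ / 2 * t ^ 2 * p ^ 2 + (1 + δ) ^ 2 / (2 * δ) * d ^ 2 - (1 + δ) * t * p * d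
        = (δ * t * p - (1 + δ) * d) ^ 2 / (2 * δ) := by field_simp; ring
    have h : 0 ≤ (δ * t * p - (1 + δ) * d) ^ 2 / (2 * δ) := by positivity
    linarith
  have h7 : t * d ^ 2 ≤ E ^ 2 * d ^ 2 := by gcongr; nlinarith
  have h8 : (1 + 2 / δ + (1 + δ) ^ 2 / (2 * δ)) * d ^ 2 ≤
      (1 + 2 / δ + (1 + δ) ^ 2 / (2 * δ)) * d ^ 2 * (E ^ 2 + 1) := by
    apply le_mul_of_one_le_right (by positivity); nlinarith
  have h9 : (1 + δ) / 2 * (t * d ^ 2) ≤ (1 + δ) / 2 * ((E ^ 2 + 1) * d ^ 2) := by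
    gcongr
    nlinarith [sq_nonneg d]
  have e1 : E * p - (p + d) = (E - 1) * p - d := by ring
  have e2 : p - (p + d) = -d := by ring
  rw [e1, e2]
  nlinarith

/-- The algebraic heart of the argument. Integrated against the kernel with `a = u x`,
`b = u y`, `p = η x`, `q = η y`, the left side is the energy of `e^{αu} η` and the first term on
the right is `(1 + δ) α / 2` times the equation tested with `e^{2αu} η²`. -/
lemma pointwise_ineq {α δ : ℝ} (hα : 0 < α) (hδ : 0 < δ) : ∃ C : ℝ, 0 < C ∧ ∀ a b p q : ℝ,
    (Real.exp (α * a) * p - Real.exp (α * b) * q) ^ 2 ≤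
      (1 + δ) * (α / 2) * ((a - b) * ((Real.exp (α * a) * p) ^ 2 - (Real.exp (α * b) * q) ^ 2)) +
        C * ((Real.exp (α * a) ^ 2 + Real.exp (α * b) ^ 2) * (p - q) ^ 2) := by
  refine ⟨1 + 2 / δ + (1 + δ) ^ 2 / (2 * δ) + (1 + δ) / 2, by positivity, ?_⟩
  set C := 1 + 2 / δ + (1 + δ) ^ 2 / (2 * δ) + (1 + δ) / 2
  have key : ∀ a b p q : ℝ, b ≤ a →
    (Real.exp (α * a) * p - Real.exp (α * b) * q) ^ 2 ≤
      (1 + δ) * (α / 2) * ((a - b) * ((Real.exp (α * a) * p) ^ 2 - (Real.exp (α * b) * q) ^ 2)) +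
        C * ((Real.exp (α * a) ^ 2 + Real.exp (α * b) ^ 2) * (p - q) ^ 2) := by
    intro a b p q hab
    have h := pointwise_core hδ (t := α * (a - b)) (mul_nonneg hα.le (by linarith)) p q
    have e : Real.exp (α * a) = Real.exp (α * b) * Real.exp (α * (a - b)) := by
      rw [← Real.exp_add]; ring_nf
    rw [e]
    have h2 := mul_le_mul_of_nonneg_left h (sq_nonneg (Real.exp (α * b)))
    have h3 : (1 + 2 / δ + (1 + δ) ^ 2 / (2 * δ) + (1 + δ) / 2) = C := rfl
    rw [h3] at h2
    calc _ = Real.exp (α * b) ^ 2 * (Real.exp (α * (a - b)) * p - q) ^ 2 := by ring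
      _ ≤ _ := h2
      _ = _ := by ring
  intro a b p q
  rcases le_total b a with h | h
  · exact key a b p q h
  · have := key b a q p h
    calc _ = (Real.exp (α * b) * q - Real.exp (α * a) * p) ^ 2 := by ring
      _ ≤ _ := this
      _ = _ := by ring

/-- Young's inequality in the form used to absorb `e^{2αu}` into `e^{(2α+1)u}`. -/
lemma young_absorb {α θ A y : ℝ} (hα : 0 < α) (hθ : 0 < θ) (hA : 0 ≤ A) (hy : 0 < y) :
    A * y ^ (2 * α) ≤ θ * (y * y ^ (2 * α)) + A * (A / θ) ^ (2 * α) := by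
  have hyp : 0 < y ^ (2 * α) := Real.rpow_pos_of_pos hy _
  have hz : 0 ≤ A * (A / θ) ^ (2 * α) := by positivity
  rcases le_total A (θ * y) with h | h
  · nlinarith [mul_le_mul_of_nonneg_right h hyp.le]
  · have : y ≤ A / θ := by rw [le_div_iff₀ hθ]; linarith
    have h2 : y ^ (2 * α) ≤ (A / θ) ^ (2 * α) := Real.rpow_le_rpow hy.le this (by linarith)
    have h3 : A * y ^ (2 * α) ≤ A * (A / θ) ^ (2 * α) := mul_le_mul_of_nonneg_left h2 hA
    have : 0 ≤ θ * (y * y ^ (2 * α)) := by positivity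
    linarith

/-! ### The kernel and the cutoff -/

/-- The kernel `|h|^{-(N+2s)}`; as a real power it takes the value `0` at `h = 0` (for
`N + 2s ≠ 0`). -/
def frKer (N : ℕ) (s : ℝ) (h : ES N) : ℝ := ‖h‖ ^ (-((N : ℝ) + 2 * s))

/-- The weight `(1+|x|)^{-(N+2s)}` of the space `L_s`. -/
def wt (N : ℕ) (s : ℝ) (x : ES N) : ℝ := (1 + ‖x‖) ^ (-((N : ℝ) + 2 * s))

/-- The cut-off profile `η(x) = (1+|x|)^{-(N+2s)/2}`, the square root of the weight `wt`. -/
def cutEta (N : ℕ) (s : ℝ) (x : ES N) : ℝ := (1 + ‖x‖) ^ (-(((N : ℝ) + 2 * s) / 2))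

section Kernel

variable {N : ℕ} {s : ℝ}

lemma frKer_nonneg (h : ES N) : 0 ≤ frKer N s h := Real.rpow_nonneg (norm_nonneg _) _

lemma frKer_neg (h : ES N) : frKer N s (-h) = frKer N s h := by simp [frKer]

lemma frKer_sub_comm (x y : ES N) : frKer N s (x - y) = frKer N s (y - x) := by
  rw [← neg_sub, frKer_neg]

lemma div_eq_frKer (a : ℝ) (h : ES N) : a / ‖h‖ ^ ((N : ℝ) + 2 * s) = a * frKer N s h := by
  rw [frKer, Real.rpow_neg (norm_nonneg _), div_eq_mul_inv]

lemma wt_pos (x : ES N) : 0 < wt N s x := Real.rpow_pos_of_pos (by positivity) _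

lemma cutEta_pos (x : ES N) : 0 < cutEta N s x := Real.rpow_pos_of_pos (by positivity) _

lemma cutEta_sq (x : ES N) : cutEta N s x ^ 2 = wt N s x := by
  rw [cutEta, wt, ← Real.rpow_natCast, ← Real.rpow_mul (by positivity)]
  congr 1; push_cast; ring

lemma measurable_frKer : Measurable (frKer N s) := by
  unfold frKer; fun_prop

lemma continuous_wt : Continuous (wt N s) := by
  unfold wt
  exact Continuous.rpow_const (by fun_prop) (fun x => Or.inl (by positivity))

lemma continuous_cutEta : Continuous (cutEta N s) := by
  unfold cutEta
  exact Continuous.rpow_const (by fun_prop) (fun x => Or.inl (by positivity))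

lemma integrable_wt (hs0 : 0 < s) : Integrable (wt N s) := by
  apply integrable_one_add_norm
  simp; linarith

lemma frKer_le_wt (hs0 : 0 < s) {ε ρ : ℝ} (hε : 0 < ε) {x y : ES N} (hx : ‖x‖ ≤ ρ)
    (h : ε < ‖x - y‖) :
    frKer N s (x - y) ≤ ((1 + ρ) / ε + 1) ^ ((N : ℝ) + 2 * s) * wt N s y := by
  have hκ : 0 ≤ (N : ℝ) + 2 * s := by positivity
  have hρ : 0 ≤ ρ := (norm_nonneg x).trans hx
  have hpos : 0 < ‖x - y‖ := hε.trans h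
  have h1 : 1 + ‖y‖ ≤ ((1 + ρ) / ε + 1) * ‖x - y‖ := by
    have h2 : ‖y‖ ≤ ‖x‖ + ‖x - y‖ := by
      have := norm_sub_le x (x - y); simpa using this
    have h3 : 1 + ρ ≤ (1 + ρ) / ε * ‖x - y‖ := by
      rw [div_mul_eq_mul_div, le_div_iff₀ hε]
      exact mul_le_mul_of_nonneg_left h.le (by positivity)
    linarith
  rw [frKer, wt, Real.rpow_neg (norm_nonneg _), Real.rpow_neg (by positivity), ← div_eq_mul_inv,
    le_div_iff₀ (by positivity), inv_mul_le_iff₀ (by positivity), mul_comm,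
    ← Real.mul_rpow (by positivity) (by positivity)]
  exact Real.rpow_le_rpow (by positivity) (h1.trans_eq (mul_comm _ _)) (by simpa [mul_comm] using hκ)

lemma frKer_le_wt_self (hs0 : 0 < s) {h : ES N} (hh : 1 < ‖h‖) :
    frKer N s h ≤ 2 ^ ((N : ℝ) + 2 * s) * wt N s h := by
  have := frKer_le_wt (N := N) hs0 one_pos (x := (0 : ES N)) (y := h) (ρ := 0) (by simp) (by simpa)
  simp only [zero_sub, frKer_neg] at this
  norm_num at this
  exact this

lemma integrableOn_rpow_mul_ker (hN : 1 ≤ N) {γ : ℝ} (hγ : 2 * s < γ) :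
    IntegrableOn (fun h : ES N => ‖h‖ ^ γ * frKer N s h) (Metric.closedBall 0 1) := by
  have : Nonempty (Fin N) := ⟨⟨0, hN⟩⟩
  have key : IntegrableOn (fun h : ES N => ‖h‖ ^ γ * ‖h‖ ^ (-((N : ℝ) + 2 * s)))
      (Metric.ball 0 2) := by
    rw [integrableOn_fun_norm_addHaar volume (E := ES N)
      (f := fun r => r ^ γ * r ^ (-((N : ℝ) + 2 * s)))]
    have : IntegrableOn (fun r : ℝ => r ^ (γ - 2 * s - 1)) (Ioo 0 2) := by
      have := intervalIntegral.intervalIntegrable_rpow' (a := 0) (b := 2)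
        (r := γ - 2 * s - 1) (by linarith)
      rw [intervalIntegrable_iff_integrableOn_Ioo_of_le (by norm_num)] at this
      exact this
    refine this.congr_fun ?_ measurableSet_Ioo
    intro r hr
    have hr0 : 0 < r := hr.1
    simp only [finrank_euclideanSpace, Fintype.card_fin, smul_eq_mul]
    rw [← Real.rpow_natCast, ← Real.rpow_add hr0, ← Real.rpow_add hr0, Nat.cast_sub hN]
    congr 1; push_cast; ring
  exact key.mono_set (fun x hx => by
    simp only [Metric.mem_closedBall, dist_zero_right, Metric.mem_ball] at *; linarith)

/-- `η` is log-Lipschitz, hence Lipschitz at unit scale with a constant comparable to its size. -/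
lemma cutEta_sub_sq_le (hs0 : 0 < s) {x y : ES N} (h : ‖x - y‖ ≤ 1) :
    (cutEta N s x - cutEta N s y) ^ 2 ≤
      ((((N : ℝ) + 2 * s) / 2) * Real.exp (((N : ℝ) + 2 * s) / 2)) ^ 2 *
        (wt N s x * ‖x - y‖ ^ (2 : ℝ)) := by
  set m := ((N : ℝ) + 2 * s) / 2 with hm
  have hm0 : 0 ≤ m := by positivity
  have hlog : ∀ x y : ES N, Real.log (1 + ‖x‖) - Real.log (1 + ‖y‖) ≤ ‖x - y‖ := by
    intro x y
    rw [← Real.log_div (by positivity) (by positivity)]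
    have h1 := Real.log_le_sub_one_of_pos (x := (1 + ‖x‖) / (1 + ‖y‖)) (by positivity)
    have h2 : (1 + ‖x‖) / (1 + ‖y‖) - 1 ≤ ‖x - y‖ := by
      rw [sub_le_iff_le_add, div_le_iff₀ (by positivity)]
      have := norm_sub_norm_le x y
      nlinarith [norm_nonneg y, norm_nonneg (x - y)]
    linarith
  set t := m * (Real.log (1 + ‖x‖) - Real.log (1 + ‖y‖)) with ht
  have hy : cutEta N s y = cutEta N s x * Real.exp t := by
    rw [cutEta, cutEta, Real.rpow_def_of_pos (by positivity), Real.rpow_def_of_pos (by positivity),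
      ← Real.exp_add, ht]
    congr 1; ring
  have ht1 : |t| ≤ m * ‖x - y‖ := by
    rw [ht, abs_mul, abs_of_nonneg hm0]
    gcongr
    rw [abs_le]
    have := hlog y x
    rw [norm_sub_rev] at this
    exact ⟨by linarith, hlog x y⟩
  have ht2 : |t| ≤ m := ht1.trans (by nlinarith)
  have h3 : |1 - Real.exp t| ≤ |t| * Real.exp |t| := by
    rw [abs_le]
    have e1 := Real.add_one_le_exp t
    have e2 := Real.add_one_le_exp (-t)
    have e3 : Real.exp (-t) * Real.exp t = 1 := by rw [← Real.exp_add]; simp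
    have e4 : 1 ≤ Real.exp |t| := Real.one_le_exp (abs_nonneg _)
    have e5 : Real.exp t ≤ Real.exp |t| := Real.exp_le_exp.2 (le_abs_self t)
    have e6 : -t ≤ |t| := neg_le_abs t
    have e7 : t ≤ |t| := le_abs_self t
    have e8 := Real.exp_pos t
    constructor
    · have : Real.exp t - 1 ≤ t * Real.exp t := by nlinarith
      have : t * Real.exp t ≤ |t| * Real.exp |t| := by
        calc t * Real.exp t ≤ |t| * Real.exp t := by gcongr
          _ ≤ _ := by gcongr
      linarith
    · nlinarith [abs_nonneg t]
  have h4 : |1 - Real.exp t| ≤ m * Real.exp m * ‖x - y‖ := by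
    calc _ ≤ |t| * Real.exp |t| := h3
      _ ≤ (m * ‖x - y‖) * Real.exp m := by gcongr
      _ = _ := by ring
  rw [hy, ← cutEta_sq]
  have h5 : (1 - Real.exp t) ^ 2 ≤ (m * Real.exp m * ‖x - y‖) ^ 2 := by
    rw [← sq_abs]; gcongr
  calc (cutEta N s x - cutEta N s x * Real.exp t) ^ 2
      = cutEta N s x ^ 2 * (1 - Real.exp t) ^ 2 := by ring
    _ ≤ cutEta N s x ^ 2 * (m * Real.exp m * ‖x - y‖) ^ 2 := by gcongr
    _ = _ := by rw [Real.rpow_two]; ring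

/-- The weight `wt` is subconvolutive. -/
lemma wt_mul_wt_le (hs0 : 0 < s) (x y : ES N) :
    wt N s y * wt N s (x - y) ≤
      2 ^ ((N : ℝ) + 2 * s) * (wt N s x * (wt N s (x - y) + wt N s y)) := by
  set κ := (N : ℝ) + 2 * s with hκ
  have hκ0 : 0 ≤ κ := by positivity
  have key : ∀ a b c : ℝ, 1 ≤ a → 1 ≤ b → 1 ≤ c → c ≤ a + b → a ≤ b →
      b ^ (-κ) ≤ 2 ^ κ * c ^ (-κ) := by
    intro a b c ha hb hc h hab
    rw [Real.rpow_neg (by linarith), Real.rpow_neg (by linarith), ← div_eq_mul_inv,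
      le_div_iff₀ (by positivity), inv_mul_le_iff₀ (by positivity), mul_comm,
      ← Real.mul_rpow (by norm_num) (by linarith)]
    exact Real.rpow_le_rpow (by linarith) (by linarith) hκ0
  have htri : 1 + ‖x‖ ≤ (1 + ‖y‖) + (1 + ‖x - y‖) := by
    have := norm_add_le y (x - y)
    simp only [add_sub_cancel] at this; linarith
  have p1 := wt_pos (s := s) x
  have p2 := wt_pos (s := s) y
  have p3 := wt_pos (s := s) (x - y)
  have p4 : (0 : ℝ) < 2 ^ κ := by positivity
  have n1 := norm_nonneg x
  have n2 := norm_nonneg y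
  have n3 := norm_nonneg (x - y)
  rcases le_total (1 + ‖y‖) (1 + ‖x - y‖) with h | h
  · have : wt N s (x - y) ≤ 2 ^ κ * wt N s x :=
      key _ _ _ (by linarith) (by linarith) (by linarith) htri h
    calc _ ≤ wt N s y * (2 ^ κ * wt N s x) := by gcongr
      _ = 2 ^ κ * (wt N s x * (0 + wt N s y)) := by ring
      _ ≤ _ := by gcongr
  · have : wt N s y ≤ 2 ^ κ * wt N s x :=
      key _ _ _ (by linarith) (by linarith) (by linarith) (by linarith) h
    calc _ ≤ (2 ^ κ * wt N s x) * wt N s (x - y) := by gcongr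
      _ = 2 ^ κ * (wt N s x * (wt N s (x - y) + 0)) := by ring
      _ ≤ _ := by gcongr

lemma integrable_comp_sub {f : ES N → ℝ} (hf : Integrable f) (x : ES N) :
    Integrable (fun y => f (x - y)) := hf.comp_sub_left x

/-- The carré du champ of `η` is controlled by `η²` itself. This is what allows the error terms
to be absorbed without enlarging the region of integration. -/
lemma carre_cutEta (hN : 1 ≤ N) (hs0 : 0 < s) (hs1 : s < 1) : ∃ C : ℝ, 0 ≤ C ∧ ∀ x : ES N,
    Integrable (fun y => (cutEta N s x - cutEta N s y) ^ 2 * frKer N s (x - y)) ∧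
    ∫ y, (cutEta N s x - cutEta N s y) ^ 2 * frKer N s (x - y) ≤ C * wt N s x := by
  set κ := (N : ℝ) + 2 * s with hκ
  have hκ0 : 0 ≤ κ := by positivity
  set M := (κ / 2 * Real.exp (κ / 2)) ^ 2 with hM
  have hM0 : 0 ≤ M := by positivity
  set A : ℝ := 2 ^ κ with hA
  have hA0 : 0 ≤ A := by positivity
  set G : ES N → ℝ := (Metric.closedBall 0 1).indicator (fun h : ES N => ‖h‖ ^ (2 : ℝ) * frKer N s h)
    with hG
  have hGi : Integrable G := by
    rw [hG, integrable_indicator_iff Metric.isClosed_closedBall.measurableSet]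
    exact integrableOn_rpow_mul_ker hN (by linarith)
  have hG0 : ∀ h, 0 ≤ G h := fun h => Set.indicator_nonneg
    (fun h _ => mul_nonneg (by positivity) (frKer_nonneg h)) h
  have hwi := integrable_wt (N := N) hs0
  set F : ES N → ES N → ℝ := fun x y =>
    wt N s x * (M * G (x - y) + (A + A * A) * (wt N s (x - y) + wt N s y)) with hF
  have hFi : ∀ x, Integrable (F x) := fun x =>
    (((integrable_comp_sub hGi x).const_mul M).add
      (((integrable_comp_sub hwi x).add hwi).const_mul _)).const_mul _
  have hle : ∀ x y, (cutEta N s x - cutEta N s y) ^ 2 * frKer N s (x - y) ≤ F x y := by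
    intro x y
    have p1 := wt_pos (s := s) x
    have p2 := wt_pos (s := s) y
    have p3 := wt_pos (s := s) (x - y)
    have hk := frKer_nonneg (s := s) (x - y)
    rcases le_or_gt ‖x - y‖ 1 with h | h
    · have h1 := cutEta_sub_sq_le hs0 h
      have h2 : G (x - y) = ‖x - y‖ ^ (2 : ℝ) * frKer N s (x - y) := by
        rw [hG, Set.indicator_of_mem]; simpa using h
      have h3 := mul_le_mul_of_nonneg_right h1 hk
      calc _ ≤ _ := h3
        _ = wt N s x * (M * G (x - y) + 0) := by rw [h2]; ring
        _ ≤ _ := by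
          simp only [hF]; gcongr; positivity
    · have h1 := frKer_le_wt_self hs0 h
      have h2 : (cutEta N s x - cutEta N s y) ^ 2 ≤ wt N s x + wt N s y := by
        rw [← cutEta_sq, ← cutEta_sq]
        nlinarith [mul_pos (cutEta_pos (s := s) x) (cutEta_pos (s := s) y)]
      have h3 := wt_mul_wt_le hs0 x y
      calc _ ≤ (wt N s x + wt N s y) * (A * wt N s (x - y)) := by gcongr
        _ = A * (wt N s x * wt N s (x - y)) + A * (wt N s y * wt N s (x - y)) := by ring
        _ ≤ A * (wt N s x * wt N s (x - y)) +
            A * (A * (wt N s x * (wt N s (x - y) + wt N s y))) := by gcongr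
        _ ≤ A * (wt N s x * (wt N s (x - y) + wt N s y)) +
            A * (A * (wt N s x * (wt N s (x - y) + wt N s y))) := by gcongr; linarith
        _ = wt N s x * (M * 0 + (A + A * A) * (wt N s (x - y) + wt N s y)) := by ring
        _ ≤ _ := by simp only [hF]; gcongr; exact hG0 _
  have hnn : ∀ x y, 0 ≤ (cutEta N s x - cutEta N s y) ^ 2 * frKer N s (x - y) := fun x y =>
    mul_nonneg (sq_nonneg _) (frKer_nonneg _)
  have hint : ∀ x, Integrable (fun y => (cutEta N s x - cutEta N s y) ^ 2 * frKer N s (x - y)) := by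
    intro x
    refine (hFi x).mono' ?_ (Eventually.of_forall fun y => ?_)
    · apply Measurable.aestronglyMeasurable
      have := continuous_cutEta (N := N) (s := s)
      have := measurable_frKer (N := N) (s := s)
      fun_prop
    · rw [Real.norm_of_nonneg (hnn x y)]; exact hle x y
  refine ⟨M * (∫ h, G h) + (A + A * A) * ((∫ h, wt N s h) + ∫ h, wt N s h), ?_, fun x =>
    ⟨hint x, ?_⟩⟩
  · have : 0 ≤ ∫ h, G h := integral_nonneg hG0
    have : 0 ≤ ∫ h, wt N s h := integral_nonneg fun h => (wt_pos h).le
    positivity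
  · calc _ ≤ ∫ y, F x y := integral_mono (hint x) (hFi x) (hle x)
      _ = _ := by
        rw [hF]
        simp only
        have i1 := (integrable_comp_sub hGi x)
        have i2 := (integrable_comp_sub hwi x)
        have e1 : ∫ y, G (x - y) = ∫ y, G y := integral_sub_left_eq_self G volume x
        have e2 : ∫ y, wt N s (x - y) = ∫ y, wt N s y := integral_sub_left_eq_self (wt N s) volume x
        rw [integral_const_mul, integral_add (f := fun y => M * G (x - y))
            (g := fun y => (A + A * A) * (wt N s (x - y) + wt N s y))
            (i1.const_mul M) ((i2.add hwi).const_mul _),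
          integral_const_mul, integral_const_mul, show ∫ y, (wt N s (x - y) + wt N s y) = (∫ y, wt N s (x - y)) + ∫ y, wt N s y from integral_add i2 hwi, e1, e2, mul_comm]

lemma frKer_smul {R : ℝ} (hR : 0 < R) (h : ES N) :
    frKer N s (R⁻¹ • h) = R ^ ((N : ℝ) + 2 * s) * frKer N s h := by
  rw [frKer, frKer, norm_smul, Real.norm_of_nonneg (by positivity),
    Real.mul_rpow (by positivity) (norm_nonneg _), Real.inv_rpow hR.le, Real.rpow_neg hR.le, inv_inv]

lemma carre_cutEta_scaled (hN : 1 ≤ N) (hs0 : 0 < s) (hs1 : s < 1) : ∃ C : ℝ, 0 ≤ C ∧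
    ∀ R : ℝ, 0 < R → ∀ x : ES N,
    Integrable (fun y => (cutEta N s (R⁻¹ • x) - cutEta N s (R⁻¹ • y)) ^ 2 * frKer N s (x - y)) ∧
    ∫ y, (cutEta N s (R⁻¹ • x) - cutEta N s (R⁻¹ • y)) ^ 2 * frKer N s (x - y) ≤
      C * R ^ (-(2 * s)) * wt N s (R⁻¹ • x) := by
  obtain ⟨C, hC, h⟩ := carre_cutEta (N := N) hN hs0 hs1
  refine ⟨C, hC, fun R hR x => ?_⟩
  obtain ⟨h1, h2⟩ := h (R⁻¹ • x)
  have e : (fun y => (cutEta N s (R⁻¹ • x) - cutEta N s (R⁻¹ • y)) ^ 2 * frKer N s (x - y)) =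
      fun y => R ^ (-((N : ℝ) + 2 * s)) * ((cutEta N s (R⁻¹ • x) - cutEta N s (R⁻¹ • y)) ^ 2 *
        frKer N s (R⁻¹ • x - R⁻¹ • y)) := by
    funext y
    rw [← smul_sub, frKer_smul hR, Real.rpow_neg hR.le]
    have : (0 : ℝ) < R ^ ((N : ℝ) + 2 * s) := by positivity
    field_simp
  constructor
  · rw [e]
    exact (h1.comp_smul (inv_ne_zero hR.ne')).const_mul _
  · rw [e, integral_const_mul, Measure.integral_comp_inv_smul_of_nonneg volume
      (fun z => (cutEta N s (R⁻¹ • x) - cutEta N s z) ^ 2 * frKer N s (R⁻¹ • x - z)) hR.le]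
    have e3 : R ^ (-((N : ℝ) + 2 * s)) * R ^ N = R ^ (-(2 * s)) := by
      rw [← Real.rpow_natCast, ← Real.rpow_add hR]; congr 1; ring
    simp only [finrank_euclideanSpace, Fintype.card_fin, smul_eq_mul]
    rw [← mul_assoc, e3]
    calc _ ≤ R ^ (-(2 * s)) * (C * wt N s (R⁻¹ • x)) := by gcongr
      _ = _ := by ring

end Kernel

/-! ### Regularity, boundedness and the weak form of the equation -/

section Regularity

variable {N : ℕ} {s : ℝ} {u : ES N → ℝ}

/-- Global Hölder regularity enters the argument only through this second difference bound. -/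
lemma second_difference (hs0 : 0 < s) (h : ∃ σ : ℝ, s < σ ∧ MemCHolder (2 * σ) u) :
    Continuous u ∧ ∃ γ C : ℝ, 2 * s < γ ∧ 0 ≤ C ∧
      ∀ x h : ES N, |2 * u x - u (x + h) - u (x - h)| ≤ C * ‖h‖ ^ γ := by
  obtain ⟨σ, hσ, h1, h2⟩ := h
  rcases le_or_gt (2 * σ) 1 with hle | hgt
  · obtain ⟨C, hC⟩ := h1 hle
    have hpos : 0 < 2 * σ := by linarith
    refine ⟨hC.continuous (by simpa using by linarith), 2 * σ, 2 * C, by linarith, by positivity,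
      fun x h => ?_⟩
    have a := hC.dist_le x (x + h)
    have b := hC.dist_le x (x - h)
    rw [Real.coe_toNNReal _ hpos.le, Real.dist_eq] at a b
    simp only [dist_self_add_right, dist_self_sub_right] at a b
    have e : 2 * u x - u (x + h) - u (x - h) = (u x - u (x + h)) + (u x - u (x - h)) := by ring
    rw [e]
    exact (abs_add_le _ _).trans (by linarith)
  · obtain ⟨hd, C, hC⟩ := h2 hgt
    refine ⟨hd.continuous, 2 * σ, 2 * C, by linarith, by positivity, fun x h => ?_⟩
    have key : ∀ k : ES N, |u (x + k) - u x - fderiv ℝ u x k| ≤ C * ‖k‖ ^ (2 * σ) := by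
      intro k
      have hb : ∀ y ∈ Metric.closedBall x ‖k‖,
          ‖fderiv ℝ u y - fderiv ℝ u x‖ ≤ C * ‖k‖ ^ (2 * σ - 1) := by
        intro y hy
        have := hC.dist_le y x
        rw [Real.coe_toNNReal _ (by linarith), dist_eq_norm (fderiv ℝ u y)] at this
        refine this.trans ?_
        gcongr
        exact Metric.mem_closedBall.1 hy
      have := (convex_closedBall x ‖k‖).norm_image_sub_le_of_norm_fderiv_le'
        (fun y _ => hd.differentiableAt) hb (Metric.mem_closedBall_self (norm_nonneg k))
        (y := x + k) (by simp)
      simp only [add_sub_cancel_left, Real.norm_eq_abs] at this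
      rcases eq_or_ne k 0 with rfl | hk
      · simp only [norm_zero, mul_zero] at this
        exact this.trans (by positivity)
      · have hk0 : 0 < ‖k‖ := norm_pos_iff.2 hk
        refine this.trans_eq ?_
        rw [mul_assoc]
        congr 1
        nth_rewrite 2 [← Real.rpow_one ‖k‖]
        rw [← Real.rpow_add hk0]
        congr 1; ring
    have a := key h
    have b := key (-h)
    rw [map_neg, norm_neg, ← sub_eq_add_neg] at b
    have e : 2 * u x - u (x + h) - u (x - h) = -((u (x + h) - u x - fderiv ℝ u x h) +
      (u (x - h) - u x - -fderiv ℝ u x h)) := by ring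
    rw [e, abs_neg]
    exact (abs_add_le _ _).trans (by linarith)

/-- A stable `u` is bounded above: testing stability with translates of one bump bounds local
averages of `e^u` uniformly, and by the second difference bound `u` cannot be much larger at a
point than on average around it. -/
lemma bounded_above (hst : IsStable N s u) (hu : Continuous u) {γ C : ℝ} (hγ : 0 < γ) (hC : 0 ≤ C)
    (h2 : ∀ x h : ES N, |2 * u x - u (x + h) - u (x - h)| ≤ C * ‖h‖ ^ γ) :
    ∃ M : ℝ, ∀ x, u x ≤ M := by
  obtain ⟨φ, hφ⟩ : ∃ φ : ContDiffBump (0 : ES N), φ = (default : ContDiffBump (0 : ES N)) :=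
    ⟨_, rfl⟩
  have hout : φ.rOut = 2 := by rw [hφ]; rfl
  have hφc : Continuous φ := φ.continuous
  have hφs : HasCompactSupport φ := φ.hasCompactSupport
  set D := fracC N s / 2 *
        ∫ x : ES N, ∫ y : ES N, (φ x - φ y) ^ 2 / ‖x - y‖ ^ ((N : ℝ) + 2 * s) with hD
  set P := ∫ h, φ h ^ 2 with hP
  have hP0 : 0 < P := by
    rw [hP]
    apply Continuous.integral_pos_of_hasCompactSupport_nonneg_nonzero (x := 0)
    · fun_prop
    · exact hφs.comp_left (g := fun t : ℝ => t ^ 2) (by simp)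
    · intro x; positivity
    · have : φ 0 = 1 := φ.one_of_mem_closedBall (by simp [φ.rIn_pos.le])
      simp [this]
  set c2 := C * 2 ^ γ / 2 with hc2
  have hint : ∀ v : ES N → ℝ, Continuous v → Integrable (fun h => Real.exp (v h) * φ h ^ 2) := by
    intro v hv
    apply Continuous.integrable_of_hasCompactSupport (by fun_prop)
    apply HasCompactSupport.mul_left
    exact hφs.comp_left (g := fun t : ℝ => t ^ 2) (by simp)
  refine ⟨D * Real.exp c2 / P, fun x0 => ?_⟩
  have hstab := hst (fun x => φ (x - x0)) (φ.contDiff.comp (contDiff_id.sub contDiff_const))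
    (hφs.comp_homeomorph (Homeomorph.subRight x0))
  have hR : ∫ x : ES N, ∫ y : ES N, (φ (x - x0) - φ (y - x0)) ^ 2 / ‖x - y‖ ^ ((N : ℝ) + 2 * s)
      = ∫ x : ES N, ∫ y : ES N, (φ x - φ y) ^ 2 / ‖x - y‖ ^ ((N : ℝ) + 2 * s) := by
    rw [← integral_sub_right_eq_self (fun x : ES N => ∫ y : ES N, (φ x - φ y) ^ 2 /
      ‖x - y‖ ^ ((N : ℝ) + 2 * s)) x0]
    congr 1; funext x
    rw [← integral_sub_right_eq_self (fun y : ES N => (φ (x - x0) - φ y) ^ 2 /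
      ‖x - x0 - y‖ ^ ((N : ℝ) + 2 * s)) x0]
    simp
  rw [hR, ← hD] at hstab
  have hL : ∫ x : ES N, Real.exp (u x) * φ (x - x0) ^ 2
      = ∫ h : ES N, Real.exp (u (x0 + h)) * φ h ^ 2 := by
    rw [← integral_add_left_eq_self (fun x : ES N => Real.exp (u x) * φ (x - x0) ^ 2) x0]
    simp
  have hL' : ∫ h : ES N, Real.exp (u (x0 - h)) * φ h ^ 2
      = ∫ h : ES N, Real.exp (u (x0 + h)) * φ h ^ 2 := by
    rw [← integral_neg_eq_self (fun h : ES N => Real.exp (u (x0 + h)) * φ h ^ 2)]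
    congr 1; funext h
    rw [φ.neg, sub_eq_add_neg]
  have hpt : ∀ h, 2 * Real.exp (u x0 - c2) * φ h ^ 2 ≤
      Real.exp (u (x0 + h)) * φ h ^ 2 + Real.exp (u (x0 - h)) * φ h ^ 2 := by
    intro h
    by_cases hh : ‖h‖ < 2
    · rw [← add_mul]
      apply mul_le_mul_of_nonneg_right _ (sq_nonneg _)
      have h3 : C * ‖h‖ ^ γ ≤ C * 2 ^ γ := by gcongr
      have h4 := (abs_le.1 (h2 x0 h)).2
      set a := u (x0 + h)
      set b := u (x0 - h)
      have h5 : Real.exp (u x0 - c2) ≤ Real.exp ((a + b) / 2) := by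
        apply Real.exp_le_exp.2; rw [hc2]; linarith
      have h6 : Real.exp a = Real.exp (a / 2) ^ 2 := by rw [← Real.exp_nat_mul]; congr 1; push_cast; ring
      have h7 : Real.exp b = Real.exp (b / 2) ^ 2 := by rw [← Real.exp_nat_mul]; congr 1; push_cast; ring
      have h8 : Real.exp ((a + b) / 2) = Real.exp (a / 2) * Real.exp (b / 2) := by
        rw [← Real.exp_add]; congr 1; ring
      nlinarith [sq_nonneg (Real.exp (a / 2) - Real.exp (b / 2))]
    · have : φ h = 0 := φ.zero_of_le_dist (by rw [hout, dist_zero_right]; linarith)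
      simp [this]
  have hi := integral_mono ((hint (fun _ => u x0) continuous_const).const_mul
      (2 * Real.exp (-c2))) ((hint (fun h => u (x0 + h)) (by fun_prop)).add
    (hint (fun h => u (x0 - h)) (by fun_prop))) (fun h => by
      have := hpt h
      have e : Real.exp (u x0 - c2) = Real.exp (u x0) * Real.exp (-c2) := by
        rw [← Real.exp_add]; congr 1
      rw [e] at this
      simp only [Pi.add_apply]
      linarith)
  simp only [Pi.add_apply] at hi
  rw [integral_const_mul, integral_const_mul, integral_add (hint (fun h => u (x0 + h)) (by fun_prop))
    (hint (fun h => u (x0 - h)) (by fun_prop)), hL', ← hL, ← hP] at hi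
  have h9 : Real.exp (-c2) * (Real.exp (u x0) * P) ≤ D := by linarith
  have h10 : Real.exp (u x0) ≤ D * Real.exp c2 / P := by
    rw [le_div_iff₀ hP0]
    have := mul_le_mul_of_nonneg_right h9 (Real.exp_pos c2).le
    have e : Real.exp (-c2) * Real.exp c2 = 1 := by rw [← Real.exp_add]; simp
    calc Real.exp (u x0) * P = Real.exp (-c2) * (Real.exp (u x0) * P) * Real.exp c2 := by
          linear_combination (-(Real.exp (u x0) * P)) * e
      _ ≤ _ := this
  have := Real.add_one_le_exp (u x0)
  linarith

end Regularity

section Truncation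

variable {N : ℕ} {s : ℝ} {u : ES N → ℝ}

/-- The kernel with the ball `|h| ≤ ε` removed. -/
def tKer (N : ℕ) (s ε : ℝ) : ES N → ℝ := Set.indicator {h : ES N | ε < ‖h‖} (frKer N s)

/-- The truncated fractional Laplacian of `u`, without the constant `c_{N,s}`. -/
def truncLap (N : ℕ) (s : ℝ) (u : ES N → ℝ) (ε : ℝ) (x : ES N) : ℝ :=
  ∫ y, (u x - u y) * tKer N s ε (x - y)

lemma fracC_pos (hs0 : 0 < s) (hs1 : s < 1) : 0 < fracC N s := by
  unfold fracC
  have h1 : 0 < Real.Gamma ((N : ℝ) / 2 + s) := Real.Gamma_pos_of_pos (by positivity)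
  have h2 : 0 < Real.Gamma (1 - s) := Real.Gamma_pos_of_pos (by linarith)
  positivity

lemma measurableSet_far (ε : ℝ) : MeasurableSet {h : ES N | ε < ‖h‖} :=
  measurableSet_lt measurable_const measurable_norm

lemma measurable_tKer (ε : ℝ) : Measurable (tKer N s ε) :=
  measurable_frKer.indicator (measurableSet_far ε)

lemma tKer_nonneg (ε : ℝ) (h : ES N) : 0 ≤ tKer N s ε h :=
  Set.indicator_nonneg (fun h _ => frKer_nonneg h) h

lemma tKer_le (ε : ℝ) (h : ES N) : tKer N s ε h ≤ frKer N s h :=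
  Set.indicator_le_self' (fun h _ => frKer_nonneg h) h

lemma tKer_neg (ε : ℝ) (h : ES N) : tKer N s ε (-h) = tKer N s ε h := by
  simp [tKer, Set.indicator, frKer_neg]

lemma tKer_sub_comm (ε : ℝ) (x y : ES N) : tKer N s ε (x - y) = tKer N s ε (y - x) := by
  rw [← neg_sub, tKer_neg]

lemma tKer_le_wt (hs0 : 0 < s) {ε ρ : ℝ} (hε : 0 < ε) (hρ : 0 ≤ ρ) :
    ∃ A : ℝ, 0 ≤ A ∧ ∀ x y : ES N, ‖x‖ ≤ ρ → tKer N s ε (x - y) ≤ A * wt N s y := by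
  refine ⟨((1 + ρ) / ε + 1) ^ ((N : ℝ) + 2 * s), by positivity, fun x y hx => ?_⟩
  by_cases h : ε < ‖x - y‖
  · rw [tKer, Set.indicator_of_mem (by exact h)]
    exact frKer_le_wt hs0 hε hx h
  · rw [tKer, Set.indicator_of_notMem (by exact h)]
    exact mul_nonneg (by positivity) (wt_pos _).le

lemma integrable_mul_wt (hL : MemLs N s u) : Integrable (fun y => |u y| * wt N s y) := by
  refine hL.2.congr (Eventually.of_forall fun y => ?_)
  simp only [wt]
  rw [Real.rpow_neg (by positivity), div_eq_mul_inv]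

lemma integrable_truncLap (hs0 : 0 < s) (hu : Continuous u) (hL : MemLs N s u) {ε : ℝ}
    (hε : 0 < ε) (x : ES N) : Integrable (fun y => (u x - u y) * tKer N s ε (x - y)) := by
  obtain ⟨A, hA, h⟩ := tKer_le_wt (N := N) hs0 hε (norm_nonneg x)
  have hw := integrable_wt (N := N) hs0
  refine ((hw.const_mul (A * |u x|)).add ((integrable_mul_wt hL).const_mul A)).mono' ?_
    (Eventually.of_forall fun y => ?_)
  · apply Measurable.aestronglyMeasurable
    have := measurable_tKer (N := N) (s := s) ε
    have := hu.measurable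
    fun_prop
  · rw [norm_mul, Real.norm_eq_abs, Real.norm_of_nonneg (tKer_nonneg _ _)]
    simp only [Pi.add_apply]
    calc _ ≤ (|u x| + |u y|) * (A * wt N s y) := by
          gcongr
          · exact tKer_nonneg _ _
          · exact abs_sub _ _
          · exact h x y le_rfl
      _ = _ := by ring

lemma tendsto_truncLap {x : ES N} {v : ℝ} (h : HasFracLapAt N s u x v) :
    Tendsto (fun ε => fracC N s * truncLap N s u ε x) (nhdsWithin 0 (Set.Ioi 0)) (nhds v) := by
  refine h.congr fun ε => ?_
  congr 1
  rw [truncLap, ← integral_indicator]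
  · congr 1; funext y
    simp only [Set.indicator, tKer, Set.mem_ofPred_eq]
    split_ifs
    · rw [div_eq_frKer]
    · simp
  · exact measurableSet_lt measurable_const (by fun_prop)

/-- The truncations at the scales `δ ≤ 1` and `1` differ by an amount bounded uniformly in `x`: the
integral over the annulus can be symmetrised, producing second differences of `u`. -/
lemma truncLap_sub_le (hN : 1 ≤ N) (hs0 : 0 < s) (hu : Continuous u) (hL : MemLs N s u) {γ C : ℝ}
    (hγ : 2 * s < γ)
    (h2 : ∀ x h : ES N, |2 * u x - u (x + h) - u (x - h)| ≤ C * ‖h‖ ^ γ) :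
    ∃ W : ℝ, ∀ x : ES N, ∀ δ : ℝ, 0 < δ → δ ≤ 1 →
      |truncLap N s u δ x - truncLap N s u 1 x| ≤ W := by
  set G : ES N → ℝ := (Metric.closedBall 0 1).indicator
    (fun h : ES N => ‖h‖ ^ γ * frKer N s h) with hG
  have hGi : Integrable G := by
    rw [hG, integrable_indicator_iff Metric.isClosed_closedBall.measurableSet]
    exact integrableOn_rpow_mul_ker hN hγ
  refine ⟨∫ h, C / 2 * G h, fun x δ hδ hδ1 => ?_⟩
  set k : ES N → ℝ := fun h => tKer N s δ h - tKer N s 1 h with hk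
  have i0 : Integrable (fun y => (u x - u y) * k (x - y)) := by
    refine ((integrable_truncLap hs0 hu hL hδ x).sub
      (integrable_truncLap hs0 hu hL one_pos x)).congr (Eventually.of_forall fun y => ?_)
    simp only [Pi.sub_apply, hk]; ring
  have e0 : truncLap N s u δ x - truncLap N s u 1 x = ∫ y, (u x - u y) * k (x - y) := by
    rw [truncLap, truncLap, ← integral_sub (integrable_truncLap hs0 hu hL hδ x)
      (integrable_truncLap hs0 hu hL one_pos x)]
    congr 1; funext y; simp only [hk]; ring
  have i1 : Integrable (fun h => (u x - u (x - h)) * k h) := by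
    have := i0.comp_sub_left x
    simpa using this
  have e1 : ∫ y, (u x - u y) * k (x - y) = ∫ h, (u x - u (x - h)) * k h := by
    rw [← integral_sub_left_eq_self (fun h => (u x - u (x - h)) * k h) volume x]
    simp
  have keven : ∀ h, k (-h) = k h := fun h => by simp only [hk, tKer_neg]
  have i2 : Integrable (fun h => (u x - u (x + h)) * k h) := by
    have := i1.comp_neg
    simpa [keven] using this
  have e2 : ∫ h, (u x - u (x - h)) * k h = ∫ h, (u x - u (x + h)) * k h := by
    rw [← integral_neg_eq_self]
    simp [keven]
  have e3 : truncLap N s u δ x - truncLap N s u 1 x =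
      ∫ h, (1 / 2) * ((2 * u x - u (x + h) - u (x - h)) * k h) := by
    have e4 : (fun h => (1 / 2) * ((2 * u x - u (x + h) - u (x - h)) * k h)) =
      fun h => (1 / 2) * ((u x - u (x - h)) * k h + (u x - u (x + h)) * k h) := by
      funext h; ring
    rw [e4, integral_const_mul, integral_add i1 i2, ← e2, ← e1, ← e0]; ring
  rw [e3, ← Real.norm_eq_abs]
  apply norm_integral_le_of_norm_le (hGi.const_mul _)
  refine Eventually.of_forall fun h => ?_
  have hk0 : 0 ≤ frKer N s h := frKer_nonneg h
  have hkabs : |k h| ≤ (Metric.closedBall 0 1).indicator (frKer N s) h := by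
    simp only [hk, tKer, Set.indicator, Set.mem_ofPred_eq, Metric.mem_closedBall, dist_zero_right]
    by_cases hh : ‖h‖ ≤ 1
    · rw [if_pos hh, if_neg (not_lt.2 hh)]
      split_ifs <;> simp [hk0, abs_of_nonneg]
    · rw [if_neg hh, if_pos (not_le.1 hh), if_pos (hδ1.trans_lt (not_le.1 hh))]; simp
  have hGk : G h = ‖h‖ ^ γ * (Metric.closedBall 0 1).indicator (frKer N s) h := by
    simp only [hG, Set.indicator]; split_ifs <;> simp
  have hC : 0 ≤ C * ‖h‖ ^ γ := (abs_nonneg _).trans (h2 x h)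
  rw [norm_mul, norm_mul, Real.norm_eq_abs (2 * u x - _ - _), Real.norm_eq_abs (k h), hGk]
  calc _ ≤ ‖(1 / 2 : ℝ)‖ * ((C * ‖h‖ ^ γ) *
        (Metric.closedBall 0 1).indicator (frKer N s) h) := by gcongr; exact h2 x h
    _ = _ := by norm_num; ring

lemma truncLap_bounded (hN : 1 ≤ N) (hs0 : 0 < s) (hs1 : s < 1) (hu : Continuous u)
    (hL : MemLs N s u) {γ C M : ℝ} (hγ : 2 * s < γ)
    (h2 : ∀ x h : ES N, |2 * u x - u (x + h) - u (x - h)| ≤ C * ‖h‖ ^ γ)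
    (hM : ∀ x, u x ≤ M) (hsol : ∀ x : ES N, HasFracLapAt N s u x (Real.exp (u x))) :
    ∃ B : ℝ, ∀ x : ES N, ∀ δ : ℝ, 0 < δ → δ ≤ 1 → |truncLap N s u δ x| ≤ B := by
  obtain ⟨W, hW⟩ := truncLap_sub_le hN hs0 hu hL hγ h2
  have hc := fracC_pos (N := N) hs0 hs1
  refine ⟨W + (W + Real.exp M / fracC N s), fun x δ hδ hδ1 => ?_⟩
  have hlim : Tendsto (fun ε => truncLap N s u ε x) (nhdsWithin 0 (Set.Ioi 0))
      (nhds (Real.exp (u x) / fracC N s)) := by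
    refine ((tendsto_truncLap (hsol x)).div_const (fracC N s)).congr fun ε => ?_
    field_simp
  have h1 : |Real.exp (u x) / fracC N s - truncLap N s u 1 x| ≤ W := by
    refine le_of_tendsto (hlim.sub_const _).abs ?_
    filter_upwards [Ioc_mem_nhdsGT (zero_lt_one' ℝ)] with ε hε
    exact hW x ε hε.1 hε.2
  have h3 := hW x δ hδ hδ1
  have h4 : Real.exp (u x) / fracC N s ≤ Real.exp M / fracC N s := by gcongr; exact hM x
  have h5 : 0 ≤ Real.exp (u x) / fracC N s := by positivity
  rw [abs_le] at *
  constructor <;> linarith [h1.1, h1.2, h3.1, h3.2]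

/-- The symmetrised weak form of the truncated operator. -/
lemma weak_form (hs0 : 0 < s) (hu : Continuous u) (hL : MemLs N s u) {ψ : ES N → ℝ}
    (hψ : Continuous ψ) (hψs : HasCompactSupport ψ) {ε : ℝ} (hε : 0 < ε) :
    Integrable (fun p : ES N × ES N => (u p.1 - u p.2) * (ψ p.1 - ψ p.2) *
      tKer N s ε (p.1 - p.2)) ∧
    ∫ p : ES N × ES N, (u p.1 - u p.2) * (ψ p.1 - ψ p.2) * tKer N s ε (p.1 - p.2) =
      2 * ∫ x, ψ x * truncLap N s u ε x := by
  obtain ⟨ρ, hρ0, hρ⟩ : ∃ ρ : ℝ, 0 ≤ ρ ∧ ∀ x, ρ < ‖x‖ → ψ x = 0 := by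
    obtain ⟨ρ, hρ⟩ := hψs.isCompact.isBounded.subset_closedBall (0 : ES N)
    refine ⟨max ρ 0, le_max_right _ _, fun x hx => ?_⟩
    by_contra hne
    have := hρ (subset_tsupport ψ hne)
    rw [Metric.mem_closedBall, dist_zero_right] at this
    linarith [le_max_left ρ 0]
  obtain ⟨A, hA, hAk⟩ := tKer_le_wt (N := N) hs0 hε hρ0
  have hw := integrable_wt (N := N) hs0
  set H : ES N × ES N → ℝ := fun p => ψ p.1 * ((u p.1 - u p.2) * tKer N s ε (p.1 - p.2)) with hH
  have j1 : Integrable (fun x => |ψ x * u x|) :=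
    ((hψ.mul hu).integrable_of_hasCompactSupport hψs.mul_right).abs
  have j2 : Integrable (fun x => |ψ x|) := (hψ.integrable_of_hasCompactSupport hψs).abs
  have hHi : Integrable H := by
    have b : Integrable (fun p : ES N × ES N => A * (|ψ p.1 * u p.1| * wt N s p.2 +
        |ψ p.1| * (|u p.2| * wt N s p.2))) :=
      ((j1.mul_prod hw).add (j2.mul_prod (integrable_mul_wt hL))).const_mul A
    refine b.mono' ?_ (Eventually.of_forall fun p => ?_)
    · apply Measurable.aestronglyMeasurable
      have := measurable_tKer (N := N) (s := s) ε
      have := hu.measurable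
      have := hψ.measurable
      fun_prop
    · simp only [hH]
      by_cases hp : ‖p.1‖ ≤ ρ
      · rw [norm_mul, norm_mul, Real.norm_eq_abs, Real.norm_eq_abs,
          Real.norm_of_nonneg (tKer_nonneg _ _)]
        calc _ ≤ |ψ p.1| * ((|u p.1| + |u p.2|) * (A * wt N s p.2)) := by
              gcongr
              · exact tKer_nonneg _ _
              · exact abs_sub _ _
              · exact hAk _ _ hp
          _ = _ := by rw [abs_mul]; ring
      · rw [hρ _ (not_le.1 hp)]; simp
  have hsw : Integrable (fun p : ES N × ES N => H p.swap) := hHi.swap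
  have e : (fun p : ES N × ES N => (u p.1 - u p.2) * (ψ p.1 - ψ p.2) *
      tKer N s ε (p.1 - p.2)) = fun p => H p + H p.swap := by
    funext p
    simp only [hH, Prod.fst_swap, Prod.snd_swap]
    rw [tKer_sub_comm ε p.2 p.1]; ring
  rw [e]
  refine ⟨hHi.add hsw, ?_⟩
  have e1 : ∫ p, H p = ∫ x, ψ x * truncLap N s u ε x := by
    rw [Measure.volume_eq_prod, integral_prod H hHi]
    congr 1; funext x
    simp only [hH, truncLap]
    rw [integral_const_mul]
  have e2 : ∫ p : ES N × ES N, H p.swap = ∫ p, H p := integral_prod_swap H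
  rw [integral_add hHi hsw, e2, e1]; ring

/-- Passage to the limit in the truncation, tested against a compactly supported function. -/
lemma tendsto_weak (hs0 : 0 < s) (hs1 : s < 1) (hu : Continuous u)
    (hsol : ∀ x : ES N, HasFracLapAt N s u x (Real.exp (u x))) {B : ℝ}
    (hB : ∀ x : ES N, ∀ δ : ℝ, 0 < δ → δ ≤ 1 → |truncLap N s u δ x| ≤ B) {ψ : ES N → ℝ}
    (hψ : Continuous ψ) (hψs : HasCompactSupport ψ) :
    Tendsto (fun n : ℕ => ∫ x, ψ x * truncLap N s u (1 / ((n : ℝ) + 1)) x) atTop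
      (nhds (∫ x, ψ x * (Real.exp (u x) / fracC N s))) := by
  have hc := fracC_pos (N := N) hs0 hs1
  have j2 : Integrable (fun x => |ψ x|) := (hψ.integrable_of_hasCompactSupport hψs).abs
  apply tendsto_integral_of_dominated_convergence (fun x => |ψ x| * B)
  · intro n
    apply AEStronglyMeasurable.mul hψ.aestronglyMeasurable
    apply StronglyMeasurable.aestronglyMeasurable
    unfold truncLap
    apply StronglyMeasurable.integral_prod_right'
      (f := fun p : ES N × ES N => (u p.1 - u p.2) * tKer N s (1 / ((n : ℝ) + 1)) (p.1 - p.2))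
    apply Measurable.stronglyMeasurable
    have := measurable_tKer (N := N) (s := s) (1 / ((n : ℝ) + 1))
    have := hu.measurable
    fun_prop
  · exact j2.mul_const B
  · intro n
    refine Eventually.of_forall fun x => ?_
    rw [norm_mul, Real.norm_eq_abs, Real.norm_eq_abs]
    gcongr
    apply hB x _ (by positivity)
    rw [div_le_one (by positivity)]
    have : (0 : ℝ) ≤ n := by positivity
    linarith
  · refine Eventually.of_forall fun x => ?_
    have hlim : Tendsto (fun ε => truncLap N s u ε x) (nhdsWithin 0 (Set.Ioi 0))
        (nhds (Real.exp (u x) / fracC N s)) := by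
      refine ((tendsto_truncLap (hsol x)).div_const (fracC N s)).congr fun ε => ?_
      field_simp
    have h0 : Tendsto (fun n : ℕ => 1 / ((n : ℝ) + 1)) atTop (nhdsWithin 0 (Set.Ioi 0)) := by
      apply tendsto_nhdsWithin_iff.2 ⟨tendsto_one_div_add_atTop_nhds_zero_nat, ?_⟩
      exact Eventually.of_forall fun n => by simp only [Set.mem_Ioi]; positivity
    exact (hlim.comp h0).const_mul _

end Truncation

/-! ### Stability for continuous test functions -/

section Stability

open scoped Convolution

variable {N : ℕ} {s : ℝ} {u : ES N → ℝ}

/-- The Gagliardo energy `∬ (φ(x)-φ(y))² |x-y|^{-N-2s}`, possibly infinite. -/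
def energy (N : ℕ) (s : ℝ) (φ : ES N → ℝ) : ENNReal :=
  ∫⁻ x, ∫⁻ y, ENNReal.ofReal ((φ x - φ y) ^ 2 * frKer N s (x - y))

lemma sq_integral_le {ρ f : ES N → ℝ} (hρ : Continuous ρ) (hρs : HasCompactSupport ρ)
    (hρ0 : ∀ z, 0 ≤ ρ z) (hρ1 : ∫ z, ρ z = 1) (hf : Continuous f) :
    (∫ z, ρ z * f z) ^ 2 ≤ ∫ z, ρ z * f z ^ 2 := by
  set m := ∫ z, ρ z * f z
  have i1 : Integrable (fun z => ρ z * f z ^ 2) :=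
    (hρ.mul (hf.pow 2)).integrable_of_hasCompactSupport hρs.mul_right
  have i2 : Integrable (fun z => ρ z * f z) :=
    (hρ.mul hf).integrable_of_hasCompactSupport hρs.mul_right
  have i3 : Integrable ρ := hρ.integrable_of_hasCompactSupport hρs
  have h : 0 ≤ ∫ z, ρ z * (f z - m) ^ 2 :=
    integral_nonneg fun z => mul_nonneg (hρ0 z) (sq_nonneg _)
  have e : (fun z => ρ z * (f z - m) ^ 2) =
      fun z => (ρ z * f z ^ 2 - 2 * m * (ρ z * f z)) + m ^ 2 * ρ z := by funext z; ring
  have e2 : ∫ z, ((ρ z * f z ^ 2 - 2 * m * (ρ z * f z)) + m ^ 2 * ρ z) =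
      (∫ z, ρ z * f z ^ 2) - 2 * m * m + m ^ 2 * 1 := by
    rw [integral_add (f := fun z => ρ z * f z ^ 2 - 2 * m * (ρ z * f z)) (i1.sub (i2.const_mul _))
      (i3.const_mul _), integral_sub i1 (i2.const_mul _), integral_const_mul, integral_const_mul, hρ1]
  rw [e, e2] at h
  linarith

/-- Mollification does not increase the energy (Jensen's inequality and translation invariance). -/
lemma energy_mollify_le {ρ φ : ES N → ℝ} (hρ : Continuous ρ) (hρs : HasCompactSupport ρ)
    (hρ0 : ∀ z, 0 ≤ ρ z) (hρ1 : ∫ z, ρ z = 1) (hφ : Continuous φ) :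
    energy N s (fun x => ∫ z, ρ z * φ (x - z)) ≤ energy N s φ := by
  have mφ := hφ.measurable
  have mρ := hρ.measurable
  have mK := measurable_frKer (N := N) (s := s)
  have hpt : ∀ x y : ES N,
      ENNReal.ofReal (((∫ z, ρ z * φ (x - z)) - ∫ z, ρ z * φ (y - z)) ^ 2 * frKer N s (x - y)) ≤
      ∫⁻ z, ENNReal.ofReal (ρ z) *
        ENNReal.ofReal ((φ (x - z) - φ (y - z)) ^ 2 * frKer N s (x - y)) := by
    intro x y
    have i : ∀ x : ES N, Integrable (fun z => ρ z * φ (x - z)) := fun x =>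
      (hρ.mul (by fun_prop)).integrable_of_hasCompactSupport hρs.mul_right
    have e : (∫ z, ρ z * φ (x - z)) - ∫ z, ρ z * φ (y - z) =
        ∫ z, ρ z * (φ (x - z) - φ (y - z)) := by
      rw [← integral_sub (i x) (i y)]; congr 1; funext z; ring
    have j : (∫ z, ρ z * (φ (x - z) - φ (y - z))) ^ 2 * frKer N s (x - y) ≤
        (∫ z, ρ z * (φ (x - z) - φ (y - z)) ^ 2) * frKer N s (x - y) :=
      mul_le_mul_of_nonneg_right (sq_integral_le hρ hρs hρ0 hρ1 (by fun_prop)) (frKer_nonneg _)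
    rw [e]
    refine (ENNReal.ofReal_le_ofReal j).trans_eq ?_
    rw [← integral_mul_const, ofReal_integral_eq_lintegral_ofReal]
    · congr 1; funext z
      rw [mul_assoc, ENNReal.ofReal_mul (hρ0 z)]
    · apply Integrable.mul_const
      exact (hρ.mul (by fun_prop)).integrable_of_hasCompactSupport hρs.mul_right
    · exact Eventually.of_forall fun z =>
        mul_nonneg (mul_nonneg (hρ0 z) (sq_nonneg _)) (frKer_nonneg _)
  calc energy N s (fun x => ∫ z, ρ z * φ (x - z))
      ≤ ∫⁻ x, ∫⁻ y, ∫⁻ z, ENNReal.ofReal (ρ z) *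
        ENNReal.ofReal ((φ (x - z) - φ (y - z)) ^ 2 * frKer N s (x - y)) :=
        lintegral_mono fun x => lintegral_mono fun y => hpt x y
    _ = ∫⁻ x, ∫⁻ z, ∫⁻ y, ENNReal.ofReal (ρ z) *
        ENNReal.ofReal ((φ (x - z) - φ (y - z)) ^ 2 * frKer N s (x - y)) := by
        refine lintegral_congr fun x => ?_
        apply lintegral_lintegral_swap
        apply Measurable.aemeasurable
        unfold Function.uncurry
        fun_prop
    _ = ∫⁻ z, ∫⁻ x, ∫⁻ y, ENNReal.ofReal (ρ z) *
        ENNReal.ofReal ((φ (x - z) - φ (y - z)) ^ 2 * frKer N s (x - y)) := by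
        apply lintegral_lintegral_swap
        apply Measurable.aemeasurable
        exact Measurable.lintegral_prod_right'
          (f := fun p : (ES N × ES N) × ES N => ENNReal.ofReal (ρ p.1.2) *
            ENNReal.ofReal ((φ (p.1.1 - p.1.2) - φ (p.2 - p.1.2)) ^ 2 * frKer N s (p.1.1 - p.2)))
          (by fun_prop)
    _ = ∫⁻ z, ENNReal.ofReal (ρ z) * energy N s φ := by
        refine lintegral_congr fun z => ?_
        have e1 : ∀ x : ES N, ∫⁻ y, ENNReal.ofReal (ρ z) *
            ENNReal.ofReal ((φ (x - z) - φ (y - z)) ^ 2 * frKer N s (x - y)) =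
            ENNReal.ofReal (ρ z) * ∫⁻ y, ENNReal.ofReal ((φ (x - z) - φ y) ^ 2 *
              frKer N s (x - z - y)) := by
          intro x
          rw [lintegral_const_mul' _ _ ENNReal.ofReal_ne_top,
            ← lintegral_sub_right_eq_self (fun y => ENNReal.ofReal ((φ (x - z) - φ y) ^ 2 *
              frKer N s (x - z - y))) z]
          simp
        simp_rw [e1]
        rw [lintegral_const_mul' _ _ ENNReal.ofReal_ne_top, energy,
          ← lintegral_sub_right_eq_self (fun x => ∫⁻ y, ENNReal.ofReal ((φ x - φ y) ^ 2 *
              frKer N s (x - y))) z]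
    _ = energy N s φ := by
        rw [lintegral_mul_const _ (by fun_prop), ← ofReal_integral_eq_lintegral_ofReal
          (hρ.integrable_of_hasCompactSupport hρs) (Eventually.of_forall hρ0), hρ1]
        simp

/-- The iterated Bochner integral in the definition of stability never exceeds the energy. -/
lemma iterated_le_energy {φ : ES N → ℝ} {B : ℝ} (hB : 0 ≤ B)
    (hE : energy N s φ ≤ ENNReal.ofReal B) :
    ∫ x : ES N, ∫ y : ES N, (φ x - φ y) ^ 2 / ‖x - y‖ ^ ((N : ℝ) + 2 * s) ≤ B := by
  have key : ∀ f : ES N → ℝ, ENNReal.ofReal (∫ x, f x) ≤ ∫⁻ x, ENNReal.ofReal (f x) := by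
    intro f
    by_cases hf : Integrable f
    · rw [integral_eq_lintegral_pos_part_sub_lintegral_neg_part hf]
      exact (ENNReal.ofReal_le_ofReal (sub_le_self _ ENNReal.toReal_nonneg)).trans
        ENNReal.ofReal_toReal_le
    · rw [integral_undef hf]; simp
  rw [← ENNReal.ofReal_le_ofReal_iff hB]
  refine (key _).trans (le_trans ?_ hE)
  refine lintegral_mono fun x => (key _).trans_eq ?_
  simp_rw [div_eq_frKer]

/-- The stability inequality extends from `C¹_c` to continuous compactly supported functions. -/
lemma stability_continuous (hs0 : 0 < s) (hs1 : s < 1) (hst : IsStable N s u) (hu : Continuous u)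
    {φ : ES N → ℝ} (hφ : Continuous φ) (hφs : HasCompactSupport φ) {B : ℝ} (hB : 0 ≤ B)
    (hE : energy N s φ ≤ ENNReal.ofReal B) :
    ∫ x, Real.exp (u x) * φ x ^ 2 ≤ fracC N s / 2 * B := by
  have hc := fracC_pos (N := N) hs0 hs1
  let b : ℕ → ContDiffBump (0 : ES N) := fun n =>
    { rIn := 1 / (2 * ((n : ℝ) + 1))
      rOut := 1 / ((n : ℝ) + 1)
      rIn_pos := by positivity
      rIn_lt_rOut := by
        apply one_div_lt_one_div_of_lt (by positivity)
        have : (0 : ℝ) ≤ n := by positivity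
        linarith }
  let f : ℕ → ES N → ℝ := fun n x => ∫ z, (b n).normed volume z * φ (x - z)
  have hf : ∀ n, f n = ((b n).normed volume ⋆[ContinuousLinearMap.lsmul ℝ ℝ, volume] φ) := by
    intro n; funext x
    simp [f, convolution_def]
  have hf1 : ∀ n, ContDiff ℝ 1 (f n) := by
    intro n; rw [hf]
    exact (b n).hasCompactSupport_normed.contDiff_convolution_left _ (b n).contDiff_normed
      hφ.locallyIntegrable
  have hf2 : ∀ n, HasCompactSupport (f n) := by
    intro n; rw [hf]
    exact (b n).hasCompactSupport_normed.convolution _ hφs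
  have hf3 : ∀ x, Tendsto (fun n => f n x) atTop (nhds (φ x)) := by
    intro x
    simp_rw [hf]
    exact ContDiffBump.convolution_tendsto_right_of_continuous
      tendsto_one_div_add_atTop_nhds_zero_nat hφ x
  have hf4 : ∀ n, energy N s (f n) ≤ ENNReal.ofReal B := fun n =>
    (energy_mollify_le (b n).continuous_normed (b n).hasCompactSupport_normed
      (b n).nonneg_normed (b n).integral_normed hφ).trans hE
  have hint : ∀ g : ES N → ℝ, Continuous g → HasCompactSupport g →
      ENNReal.ofReal (∫ x, Real.exp (u x) * g x ^ 2) =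
        ∫⁻ x, ENNReal.ofReal (Real.exp (u x) * g x ^ 2) := by
    intro g hg hgs
    rw [ofReal_integral_eq_lintegral_ofReal]
    · apply Continuous.integrable_of_hasCompactSupport (by fun_prop)
      apply HasCompactSupport.mul_left
      exact hgs.comp_left (g := fun t : ℝ => t ^ 2) (by simp)
    · exact Eventually.of_forall fun x => by positivity
  have hn : ∀ n, ∫⁻ x, ENNReal.ofReal (Real.exp (u x) * f n x ^ 2) ≤
      ENNReal.ofReal (fracC N s / 2 * B) := by
    intro n
    rw [← hint _ (hf1 n).continuous (hf2 n)]
    apply ENNReal.ofReal_le_ofReal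
    refine (hst (f n) (hf1 n) (hf2 n)).trans ?_
    gcongr
    exact iterated_le_energy hB (hf4 n)
  rw [← ENNReal.ofReal_le_ofReal_iff (by positivity), hint φ hφ hφs]
  calc _ = ∫⁻ x, liminf (fun n => ENNReal.ofReal (Real.exp (u x) * f n x ^ 2)) atTop := by
        refine lintegral_congr fun x => (Tendsto.liminf_eq ?_).symm
        exact ENNReal.tendsto_ofReal (((hf3 x).pow 2).const_mul _)
    _ ≤ liminf (fun n => ∫⁻ x, ENNReal.ofReal (Real.exp (u x) * f n x ^ 2)) atTop := by
        apply lintegral_liminf_le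
        intro n
        have := (hf1 n).continuous.measurable
        have := hu.measurable
        fun_prop
    _ ≤ liminf (fun _ : ℕ => ENNReal.ofReal (fracC N s / 2 * B)) atTop :=
        liminf_le_liminf (Eventually.of_forall hn)
    _ = _ := by simp

end Stability

/-! ### The energy of a product with a cutoff -/

section Conclusion

variable {N : ℕ} {s : ℝ} {u : ES N → ℝ}

/-- Integrability of the error term, given a bound on the carré du champ of the cutoff `η`. -/
lemma error_integrable {g η ω : ES N → ℝ} {K D : ℝ} (hg : Continuous g) (hg0 : ∀ x, 0 ≤ g x)
    (hgK : ∀ x, g x ≤ K) (hη : Continuous η) (hω : Integrable ω)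
    (hΓ : ∀ x, Integrable (fun y => (η x - η y) ^ 2 * frKer N s (x - y)) ∧
      ∫ y, (η x - η y) ^ 2 * frKer N s (x - y) ≤ D * ω x) :
    Integrable (fun p : ES N × ES N => (g p.1 + g p.2) *
      ((η p.1 - η p.2) ^ 2 * frKer N s (p.1 - p.2))) ∧
    ∫ p : ES N × ES N, (g p.1 + g p.2) * ((η p.1 - η p.2) ^ 2 * frKer N s (p.1 - p.2)) ≤
      2 * (D * ∫ x, g x * ω x) := by
  have mK := measurable_frKer (N := N) (s := s)
  have mη := hη.measurable
  have mg := hg.measurable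
  set k : ES N × ES N → ℝ := fun p => (η p.1 - η p.2) ^ 2 * frKer N s (p.1 - p.2) with hk
  have hk0 : ∀ p, 0 ≤ k p := fun p => mul_nonneg (sq_nonneg _) (frKer_nonneg _)
  have mk : Measurable k := by rw [hk]; fun_prop
  set H : ES N × ES N → ℝ := fun p => g p.1 * k p with hH
  have mH : Measurable H := by rw [hH]; fun_prop
  have hin : ∀ x, 0 ≤ ∫ y, k (x, y) := fun x => integral_nonneg fun y => hk0 _
  have gω : Integrable (fun x => g x * ω x) :=
    hω.bdd_mul (c := K) hg.aestronglyMeasurable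
      (Eventually.of_forall fun x => by rw [Real.norm_of_nonneg (hg0 x)]; exact hgK x)
  have le1 : ∀ x, g x * ∫ y, k (x, y) ≤ D * (g x * ω x) := fun x => by
    calc _ ≤ g x * (D * ω x) := mul_le_mul_of_nonneg_left (hΓ x).2 (hg0 x)
      _ = _ := by ring
  have i1 : Integrable (fun x => g x * ∫ y, k (x, y)) := by
    refine (gω.const_mul D).mono' ?_ (Eventually.of_forall fun x => ?_)
    · exact hg.aestronglyMeasurable.mul
        (mk.stronglyMeasurable.integral_prod_right').aestronglyMeasurable
    · rw [Real.norm_of_nonneg (mul_nonneg (hg0 x) (hin x))]; exact le1 x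
  have hHi : Integrable H := by
    rw [Measure.volume_eq_prod, integrable_prod_iff mH.aestronglyMeasurable]
    refine ⟨Eventually.of_forall fun x => (hΓ x).1.const_mul (g x), i1.congr ?_⟩
    refine Eventually.of_forall fun x => ?_
    simp only [hH]
    rw [← integral_const_mul]
    congr 1; funext y
    rw [Real.norm_of_nonneg (mul_nonneg (hg0 x) (hk0 _))]
  have hsw : Integrable (fun p : ES N × ES N => H p.swap) := hHi.swap
  have e : (fun p : ES N × ES N => (g p.1 + g p.2) * k p) = fun p => H p + H p.swap := by
    funext p
    simp only [hH, hk, Prod.fst_swap, Prod.snd_swap]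
    rw [frKer_sub_comm p.2 p.1]; ring
  change Integrable (fun p : ES N × ES N => (g p.1 + g p.2) * k p) ∧
    ∫ p : ES N × ES N, (g p.1 + g p.2) * k p ≤ _
  rw [e]
  refine ⟨hHi.add hsw, ?_⟩
  have e1 : ∫ p, H p = ∫ x, g x * ∫ y, k (x, y) := by
    rw [Measure.volume_eq_prod, integral_prod H hHi]
    congr 1; funext x
    simp only [hH]
    rw [integral_const_mul]
  have e2 : ∫ p : ES N × ES N, H p.swap = ∫ p, H p := integral_prod_swap H
  rw [integral_add hHi hsw, e2, e1, ← two_mul]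
  have := integral_mono i1 (gω.const_mul D) le1
  rw [integral_const_mul] at this
  linarith

/-- A pointwise comparison of increments turns, by means of the equation, into a bound on the
energy. The comparison is integrated against the truncated kernels, and Fatou's lemma removes the
truncation. -/
lemma energy_le_of_pointwise (hs0 : 0 < s) (hs1 : s < 1) (hu : Continuous u) (hL : MemLs N s u)
    (hsol : ∀ x : ES N, HasFracLapAt N s u x (Real.exp (u x))) {B : ℝ}
    (hB : ∀ x : ES N, ∀ δ : ℝ, 0 < δ → δ ≤ 1 → |truncLap N s u δ x| ≤ B) {φ ψ : ES N → ℝ}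
    (hφ : Continuous φ) (hψ : Continuous ψ) (hψs : HasCompactSupport ψ) {a : ℝ}
    {f : ES N × ES N → ℝ} (hf0 : ∀ p, 0 ≤ f p)
    (hfi : Integrable (fun p : ES N × ES N => f p * frKer N s (p.1 - p.2)))
    (hpt : ∀ x y, (φ x - φ y) ^ 2 ≤ a * ((u x - u y) * (ψ x - ψ y)) + f (x, y)) :
    energy N s φ ≤ ENNReal.ofReal (2 * a * (∫ x, ψ x * (Real.exp (u x) / fracC N s)) +
      ∫ p : ES N × ES N, f p * frKer N s (p.1 - p.2)) := by
  have mφ := hφ.measurable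
  have mK := measurable_frKer (N := N) (s := s)
  set F : ES N × ES N → ℝ := fun p => f p * frKer N s (p.1 - p.2) with hF
  set e : ℕ → ℝ := fun n => 1 / ((n : ℝ) + 1) with he
  have he0 : ∀ n, 0 < e n := fun n => by simp only [he]; positivity
  have helim : Tendsto e atTop (nhds 0) := tendsto_one_div_add_atTop_nhds_zero_nat
  have step : ∀ n, ∫⁻ p : ES N × ES N, ENNReal.ofReal ((φ p.1 - φ p.2) ^ 2 *
      tKer N s (e n) (p.1 - p.2)) ≤
      ENNReal.ofReal (2 * a * (∫ x, ψ x * truncLap N s u (e n) x) + ∫ p, F p) := by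
    intro n
    obtain ⟨w1, w2⟩ := weak_form hs0 hu hL hψ hψs (he0 n)
    have hle : ∀ p : ES N × ES N, (φ p.1 - φ p.2) ^ 2 * tKer N s (e n) (p.1 - p.2) ≤
        a * ((u p.1 - u p.2) * (ψ p.1 - ψ p.2) * tKer N s (e n) (p.1 - p.2)) + F p := by
      intro p
      calc _ ≤ (a * ((u p.1 - u p.2) * (ψ p.1 - ψ p.2)) + f p) * tKer N s (e n) (p.1 - p.2) :=
            mul_le_mul_of_nonneg_right (hpt p.1 p.2) (tKer_nonneg _ _)
        _ = a * ((u p.1 - u p.2) * (ψ p.1 - ψ p.2) * tKer N s (e n) (p.1 - p.2)) +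
            f p * tKer N s (e n) (p.1 - p.2) := by ring
        _ ≤ _ := by
            have := mul_le_mul_of_nonneg_left (tKer_le (s := s) (e n) (p.1 - p.2)) (hf0 p)
            simp only [hF]; linarith
    have hi : Integrable (fun p : ES N × ES N => a * ((u p.1 - u p.2) * (ψ p.1 - ψ p.2) *
        tKer N s (e n) (p.1 - p.2)) + F p) := (w1.const_mul a).add hfi
    refine (lintegral_mono fun p => ENNReal.ofReal_le_ofReal (hle p)).trans_eq ?_
    rw [← ofReal_integral_eq_lintegral_ofReal hi]
    · rw [integral_add (w1.const_mul a) hfi, integral_const_mul, w2]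
      congr 1; ring
    · refine Eventually.of_forall fun p => le_trans ?_ (hle p)
      exact mul_nonneg (sq_nonneg _) (tKer_nonneg _ _)
  have hlim : Tendsto (fun n => ENNReal.ofReal (2 * a * (∫ x, ψ x * truncLap N s u (e n) x) +
      ∫ p, F p)) atTop (nhds (ENNReal.ofReal (2 * a * (∫ x, ψ x * (Real.exp (u x) / fracC N s)) +
      ∫ p, F p))) :=
    ENNReal.tendsto_ofReal (((tendsto_weak hs0 hs1 hu hsol hB hψ hψs).const_mul _).add_const _)
  rw [energy, ← lintegral_prod (fun p : ES N × ES N => ENNReal.ofReal ((φ p.1 - φ p.2) ^ 2 *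
    frKer N s (p.1 - p.2))) (Measurable.aemeasurable (by fun_prop)), ← Measure.volume_eq_prod]
  rw [← hlim.liminf_eq]
  refine le_trans ?_ (liminf_le_liminf (Eventually.of_forall step))
  refine le_trans ?_ (lintegral_liminf_le fun n => ?_)
  · refine lintegral_mono fun p => le_of_eq (Tendsto.liminf_eq ?_).symm
    apply ENNReal.tendsto_ofReal
    apply tendsto_const_nhds.congr'
    by_cases hp : p.1 = p.2
    · exact Eventually.of_forall fun n => by simp [hp]
    · have : 0 < ‖p.1 - p.2‖ := norm_pos_iff.2 (sub_ne_zero.2 hp)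
      filter_upwards [helim.eventually_lt_const this] with n hn
      rw [tKer, Set.indicator_of_mem (by simpa using hn)]
  · have := measurable_tKer (N := N) (s := s) (e n)
    fun_prop

lemma cutEta_le_one (hs0 : 0 < s) (x : ES N) : cutEta N s x ≤ 1 := by
  apply Real.rpow_le_one_of_one_le_of_nonpos
  · linarith [norm_nonneg x]
  · have : (0 : ℝ) ≤ N := by positivity
    linarith

lemma tendsto_cutEta (hN : 1 ≤ N) (hs0 : 0 < s) :
    Tendsto (cutEta N s) (cocompact (ES N)) (nhds 0) := by
  have h : (0 : ℝ) < ((N : ℝ) + 2 * s) / 2 := by positivity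
  exact (tendsto_rpow_neg_atTop h).comp
    (tendsto_atTop_add_const_left _ 1 (tendsto_norm_cocompact_atTop (E := ES N)))

/-- Lowering the cutoff by a positive constant makes its support compact. -/
lemma hasCompactSupport_cut (hN : 1 ≤ N) (hs0 : 0 < s) {R t : ℝ} (hR : 0 < R) (ht : 0 < t) :
    HasCompactSupport (fun x : ES N => max (cutEta N s (R⁻¹ • x) - t) 0) := by
  have h1 : Tendsto (fun x : ES N => R⁻¹ • x) (cocompact (ES N)) (cocompact (ES N)) :=
    (Homeomorph.smulOfNeZero R⁻¹ (inv_ne_zero hR.ne')).isClosedEmbedding.tendsto_cocompact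
  have h2 := ((tendsto_cutEta hN hs0).comp h1).eventually_lt_const ht
  rw [hasCompactSupport_iff_eventuallyEq, coclosedCompact_eq_cocompact]
  filter_upwards [h2] with x hx
  simp only [Function.comp_apply] at hx
  simp only [Pi.zero_apply]
  exact max_eq_right (by linarith)

end Conclusion

/-! ### Integral estimates -/

section Estimate

variable {N : ℕ} {s : ℝ} {u : ES N → ℝ}

lemma integrable_wt_scaled (hs0 : 0 < s) {R : ℝ} (hR : 0 < R) :
    Integrable (fun x : ES N => wt N s (R⁻¹ • x)) :=
  (integrable_wt hs0).comp_smul (inv_ne_zero hR.ne')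

/-- Testing the equation with `e^{2αu} η²` and stability with `e^{αu} η`, where `η` is the cutoff
at scale `R`: for `α < 2` the leading term of the former is strictly dominated by the latter. -/
lemma scaled_estimate (hN : 1 ≤ N) (hs0 : 0 < s) (hs1 : s < 1) (hu : Continuous u)
    (hL : MemLs N s u) (hst : IsStable N s u)
    (hsol : ∀ x : ES N, HasFracLapAt N s u x (Real.exp (u x))) {B M : ℝ}
    (hB : ∀ x : ES N, ∀ δ : ℝ, 0 < δ → δ ≤ 1 → |truncLap N s u δ x| ≤ B)
    (hM : ∀ x, u x ≤ M) {α : ℝ} (hα0 : 0 < α) (hα2 : α < 2) :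
    ∃ κ D : ℝ, 0 < κ ∧ 0 ≤ D ∧ ∀ R : ℝ, 0 < R →
      κ * ∫ x, Real.exp (u x) * (Real.exp (α * u x) ^ 2 * wt N s (R⁻¹ • x)) ≤
        D * R ^ (-(2 * s)) * ∫ x, Real.exp (α * u x) ^ 2 * wt N s (R⁻¹ • x) := by
  have hc := fracC_pos (N := N) hs0 hs1
  -- `δ` is chosen so that `(1 + δ) α / 2` is the midpoint of `α / 2` and `1`
  obtain ⟨C, hC, hpw⟩ := pointwise_ineq (δ := (2 - α) / (2 * α)) hα0
    (div_pos (by linarith) (by linarith))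
  have ha : (1 + (2 - α) / (2 * α)) * (α / 2) = (2 + α) / 4 := by field_simp; ring
  rw [ha] at hpw
  obtain ⟨G, hG, hΓ⟩ := carre_cutEta_scaled (N := N) hN hs0 hs1
  refine ⟨(2 - α) / 4, fracC N s * C * G, by linarith, by positivity, fun R hR => ?_⟩
  set η : ES N → ℝ := fun x => cutEta N s (R⁻¹ • x) with hη
  have cη : Continuous η := continuous_cutEta.comp (continuous_const_smul _)
  have hη0 : ∀ x, 0 ≤ η x := fun x => (cutEta_pos _).le
  set w : ES N → ℝ := fun x => Real.exp (α * u x) with hw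
  have cw : Continuous w := by simp only [hw]; fun_prop
  have hwK : ∀ x, w x ^ 2 ≤ Real.exp (α * M) ^ 2 := fun x => by
    simp only [hw]; gcongr; exact hM x
  obtain ⟨E1, E2⟩ := error_integrable (g := fun x => w x ^ 2) (cw.pow 2)
    (fun x => sq_nonneg _) hwK cη (integrable_wt_scaled (N := N) hs0 hR) (hΓ R hR)
  set f : ES N × ES N → ℝ := fun p => C * ((w p.1 ^ 2 + w p.2 ^ 2) * (η p.1 - η p.2) ^ 2) with hf
  have ef : (fun p : ES N × ES N => f p * frKer N s (p.1 - p.2)) = fun p => C *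
      ((w p.1 ^ 2 + w p.2 ^ 2) * ((η p.1 - η p.2) ^ 2 * frKer N s (p.1 - p.2))) := by
    funext p; simp only [hf]; ring
  have fi : Integrable (fun p : ES N × ES N => f p * frKer N s (p.1 - p.2)) := by
    rw [ef]; exact E1.const_mul C
  have fle : ∫ p : ES N × ES N, f p * frKer N s (p.1 - p.2) ≤
      C * (2 * (G * R ^ (-(2 * s)) * ∫ x, w x ^ 2 * wt N s (R⁻¹ • x))) := by
    rw [ef, integral_const_mul]
    exact mul_le_mul_of_nonneg_left E2 hC.le
  have f0 : ∀ p, 0 ≤ f p := fun p => by simp only [hf]; positivity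
  have fI0 : 0 ≤ ∫ p : ES N × ES N, f p * frKer N s (p.1 - p.2) :=
    integral_nonneg fun p => mul_nonneg (f0 p) (frKer_nonneg _)
  have step : ∀ n : ℕ, (2 - α) / 4 * ∫ x, Real.exp (u x) *
      (w x * max (η x - 1 / ((n : ℝ) + 1)) 0) ^ 2 ≤ fracC N s * C * G * R ^ (-(2 * s)) *
        ∫ x, w x ^ 2 * wt N s (R⁻¹ • x) := by
    intro n
    set ζ : ES N → ℝ := fun x => max (η x - 1 / ((n : ℝ) + 1)) 0 with hζ
    have cζ : Continuous ζ := by simp only [hζ]; fun_prop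
    have sζ : HasCompactSupport ζ := hasCompactSupport_cut hN hs0 hR (by positivity)
    have sφ : HasCompactSupport (fun x => w x * ζ x) := sζ.mul_left
    have sψ : HasCompactSupport (fun x => (w x * ζ x) ^ 2) :=
      sφ.comp_left (g := fun t : ℝ => t ^ 2) (by simp)
    have dζ : ∀ x y, (ζ x - ζ y) ^ 2 ≤ (η x - η y) ^ 2 := fun x y => by
      apply sq_le_sq.2
      have := abs_max_sub_max_le_abs (η x - 1 / ((n : ℝ) + 1)) (η y - 1 / ((n : ℝ) + 1)) 0
      rwa [sub_sub_sub_cancel_right] at this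
    have hE := energy_le_of_pointwise hs0 hs1 hu hL hsol hB (cw.mul cζ) ((cw.mul cζ).pow 2) sψ
      (a := (2 + α) / 4) f0 fi (fun x y => by
        refine (hpw (u x) (u y) (ζ x) (ζ y)).trans ?_
        have : (w x ^ 2 + w y ^ 2) * (ζ x - ζ y) ^ 2 ≤ (w x ^ 2 + w y ^ 2) * (η x - η y) ^ 2 :=
          mul_le_mul_of_nonneg_left (dζ x y) (by positivity)
        have := mul_le_mul_of_nonneg_left this hC.le
        simp only [hf, Pi.mul_apply, Pi.pow_apply]
        linarith)
    have e : ∀ x, (w * ζ) x ^ 2 = (w x * ζ x) ^ 2 := fun x => rfl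
    set J := ∫ x, Real.exp (u x) * (w x * ζ x) ^ 2 with hJ
    have eJ : ∫ x, ((w * ζ) ^ 2) x * (Real.exp (u x) / fracC N s) = J / fracC N s := by
      rw [hJ, ← integral_div]; congr 1; funext x
      simp only [Pi.mul_apply, Pi.pow_apply]; ring
    have hJ0 : 0 ≤ J := integral_nonneg fun x => by positivity
    have hS := stability_continuous hs0 hs1 hst hu (cw.mul cζ) sφ (by
      have : 0 ≤ 2 * ((2 + α) / 4) * (J / fracC N s) := by positivity
      exact add_nonneg this fI0) (by rw [eJ] at hE; exact hE)
    have hS' : J ≤ (2 + α) / 4 * J + fracC N s / 2 *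
        ∫ p : ES N × ES N, f p * frKer N s (p.1 - p.2) := by
      refine hS.trans_eq ?_
      field_simp
    have := mul_le_mul_of_nonneg_left fle (by positivity : 0 ≤ fracC N s / 2)
    calc (2 - α) / 4 * J ≤ fracC N s / 2 *
          ∫ p : ES N × ES N, f p * frKer N s (p.1 - p.2) := by linarith
      _ ≤ _ := this.trans_eq (by ring)
  suffices T : Tendsto (fun n : ℕ => ∫ x, Real.exp (u x) *
      (w x * max (η x - 1 / ((n : ℝ) + 1)) 0) ^ 2) atTop
      (nhds (∫ x, Real.exp (u x) * (w x ^ 2 * wt N s (R⁻¹ • x)))) by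
    exact le_of_tendsto' (T.const_mul _) step
  apply tendsto_integral_of_dominated_convergence
    (fun x => Real.exp M * (Real.exp (α * M) ^ 2 * wt N s (R⁻¹ • x)))
  · intro n
    apply Continuous.aestronglyMeasurable
    fun_prop
  · exact ((integrable_wt_scaled hs0 hR).const_mul _).const_mul _
  · intro n
    refine Eventually.of_forall fun x => ?_
    rw [Real.norm_of_nonneg (by positivity), ← cutEta_sq, mul_pow]
    have : 0 ≤ 1 / ((n : ℝ) + 1) := by positivity
    have hm : max (η x - 1 / ((n : ℝ) + 1)) 0 ≤ η x := max_le (by linarith) (hη0 x)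
    have := hwK x
    gcongr
    exact hM x
  · refine Eventually.of_forall fun x => ?_
    rw [← cutEta_sq, ← mul_pow]
    have h1 : Tendsto (fun n : ℕ => max (η x - 1 / ((n : ℝ) + 1)) 0) atTop (nhds (η x)) := by
      have := (tendsto_one_div_add_atTop_nhds_zero_nat (𝕜 := ℝ)).const_sub (η x)
      have := this.max (tendsto_const_nhds (x := (0 : ℝ)))
      rwa [sub_zero, max_eq_left (hη0 x)] at this
    exact ((h1.const_mul _).pow 2).const_mul _

/-- Young's inequality absorbs the right-hand side of `scaled_estimate`, leaving a decay rate. -/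
lemma decay_estimate (hN : 1 ≤ N) (hs0 : 0 < s) (hs1 : s < 1) (hu : Continuous u)
    (hL : MemLs N s u) (hst : IsStable N s u)
    (hsol : ∀ x : ES N, HasFracLapAt N s u x (Real.exp (u x))) {B M : ℝ}
    (hB : ∀ x : ES N, ∀ δ : ℝ, 0 < δ → δ ≤ 1 → |truncLap N s u δ x| ≤ B)
    (hM : ∀ x, u x ≤ M) {α : ℝ} (hα0 : 0 < α) (hα2 : α < 2) :
    ∃ D : ℝ, ∀ R : ℝ, 0 < R →
      ∫ x, Real.exp (u x) * (Real.exp (α * u x) ^ 2 * wt N s (R⁻¹ • x)) ≤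
        D * R ^ ((N : ℝ) - 2 * s * (1 + 2 * α)) := by
  obtain ⟨κ, D, hκ, hD, h⟩ := scaled_estimate hN hs0 hs1 hu hL hst hsol hB hM hα0 hα2
  refine ⟨(κ / 2)⁻¹ * (D * (D / (κ / 2)) ^ (2 * α) * ∫ x, wt N s x), fun R hR => ?_⟩
  have hwi := integrable_wt_scaled (N := N) hs0 hR
  set A := D * R ^ (-(2 * s)) with hA
  have hA0 : 0 ≤ A := by positivity
  have hpow : ∀ x, Real.exp (α * u x) ^ 2 = Real.exp (u x) ^ (2 * α) := fun x => by
    rw [← Real.exp_mul, ← Real.exp_nat_mul]; congr 1; push_cast; ring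
  have i2 : Integrable (fun x => Real.exp (α * u x) ^ 2 * wt N s (R⁻¹ • x)) := by
    refine hwi.bdd_mul (c := Real.exp (α * M) ^ 2) (by
      apply Continuous.aestronglyMeasurable; fun_prop) (Eventually.of_forall fun x => ?_)
    rw [Real.norm_of_nonneg (by positivity)]
    gcongr; exact hM x
  have i1 : Integrable (fun x => Real.exp (u x) *
      (Real.exp (α * u x) ^ 2 * wt N s (R⁻¹ • x))) := by
    refine i2.bdd_mul (c := Real.exp M) (by
      apply Continuous.aestronglyMeasurable; fun_prop) (Eventually.of_forall fun x => ?_)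
    rw [Real.norm_of_nonneg (by positivity)]
    gcongr; exact hM x
  have hY : A * ∫ x, Real.exp (α * u x) ^ 2 * wt N s (R⁻¹ • x) ≤
      κ / 2 * (∫ x, Real.exp (u x) * (Real.exp (α * u x) ^ 2 * wt N s (R⁻¹ • x))) +
      A * (A / (κ / 2)) ^ (2 * α) * ∫ x : ES N, wt N s (R⁻¹ • x) := by
    rw [← integral_const_mul, ← integral_const_mul, ← integral_const_mul,
      ← integral_add (i1.const_mul _) (hwi.const_mul _)]
    refine integral_mono (i2.const_mul _) ((i1.const_mul _).add (hwi.const_mul _)) fun x => ?_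
    have := mul_le_mul_of_nonneg_right (young_absorb hα0 (half_pos hκ) hA0 (Real.exp_pos (u x)))
      (wt_pos (N := N) (s := s) (R⁻¹ • x)).le
    rw [hpow]
    linarith
  have hscale : ∫ x : ES N, wt N s (R⁻¹ • x) = R ^ N * ∫ x, wt N s x := by
    rw [Measure.integral_comp_inv_smul_of_nonneg volume (wt N s) hR.le]
    simp only [finrank_euclideanSpace, Fintype.card_fin, smul_eq_mul]
  have hRpow : A * (A / (κ / 2)) ^ (2 * α) * R ^ N =
      D * (D / (κ / 2)) ^ (2 * α) * R ^ ((N : ℝ) - 2 * s * (1 + 2 * α)) := by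
    have e1 : A / (κ / 2) = D / (κ / 2) * R ^ (-(2 * s)) := by rw [hA]; ring
    have e2 : R ^ ((N : ℝ) - 2 * s * (1 + 2 * α)) =
        R ^ (-(2 * s)) * R ^ (-(2 * s) * (2 * α)) * R ^ N := by
      rw [← Real.rpow_natCast R N, ← Real.rpow_add hR, ← Real.rpow_add hR]; congr 1; ring
    rw [e1, Real.mul_rpow (by positivity) (by positivity), ← Real.rpow_mul hR.le, e2, hA]
    ring
  have hfin : κ / 2 * ∫ x, Real.exp (u x) * (Real.exp (α * u x) ^ 2 * wt N s (R⁻¹ • x)) ≤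
      D * (D / (κ / 2)) ^ (2 * α) * R ^ ((N : ℝ) - 2 * s * (1 + 2 * α)) * ∫ x, wt N s x := by
    have h1 := (h R hR).trans hY
    rw [hscale, ← mul_assoc, hRpow] at h1
    linarith
  calc _ ≤ (κ / 2)⁻¹ * (D * (D / (κ / 2)) ^ (2 * α) * R ^ ((N : ℝ) - 2 * s * (1 + 2 * α)) *
        ∫ x, wt N s x) := (le_inv_mul_iff₀ (half_pos hκ)).2 hfin
    _ = _ := by ring

end Estimate

/-! ### Nonexistence -/

/-- If `N < 10s` with `0 < s < 1`, there is no stable solution of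
the fractional Gelfand equation `(-Δ)^s u = e^u` on `ℝ^N`. -/
theorem no_stable_solution (N : ℕ) (hN : 1 ≤ N) (s : ℝ) (hs0 : 0 < s) (hs1 : s < 1)
    (hdim : (N : ℝ) < 10 * s) :
    ¬ ∃ u : ES N → ℝ, IsSolution N s u ∧ IsStable N s u := by
  rintro ⟨u, ⟨hreg, hL, hsol⟩, hst⟩
  obtain ⟨hu, γ, C, hγ, hC, h2⟩ := second_difference hs0 hreg
  obtain ⟨M, hM⟩ := bounded_above hst hu (by linarith) hC h2
  obtain ⟨B, hB⟩ := truncLap_bounded hN hs0 hs1 hu hL hγ h2 hM hsol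
  -- an exponent `α < 2` with `N < 2s(1 + 2α)`; it exists because `N < 10s`
  obtain ⟨α, hα, hα2⟩ : ∃ α : ℝ, max 0 (((N : ℝ) / (2 * s) - 1) / 2) < α ∧ α < 2 := by
    apply exists_between
    apply max_lt (by norm_num)
    have : (N : ℝ) / (2 * s) < 5 := by rw [div_lt_iff₀ (by positivity)]; linarith
    linarith
  have hα0 : 0 < α := (le_max_left _ _).trans_lt hα
  have hexp : (N : ℝ) - 2 * s * (1 + 2 * α) < 0 := by
    have h1 := (le_max_right (0 : ℝ) (((N : ℝ) / (2 * s) - 1) / 2)).trans_lt hα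
    have h3 : (N : ℝ) / (2 * s) < 1 + 2 * α := by linarith
    rw [div_lt_iff₀ (by positivity)] at h3
    linarith
  obtain ⟨D, hD⟩ := decay_estimate hN hs0 hs1 hu hL hst hsol hB hM hα0 hα2
  set F : ℝ → ES N → ℝ := fun R x => Real.exp (u x) *
    (Real.exp (α * u x) ^ 2 * wt N s (R⁻¹ • x)) with hF
  have hFpos : ∀ R x, 0 < F R x := fun R x => by
    have := wt_pos (N := N) (s := s) (R⁻¹ • x)
    simp only [hF]; positivity
  have hFi : ∀ R, 0 < R → Integrable (F R) := by
    intro R hR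
    have cw := continuous_wt (N := N) (s := s)
    refine (((integrable_wt_scaled (N := N) hs0 hR).const_mul
      (Real.exp M * Real.exp (α * M) ^ 2))).mono' (by
        apply Continuous.aestronglyMeasurable; simp only [hF]; fun_prop)
      (Eventually.of_forall fun x => ?_)
    have := wt_pos (N := N) (s := s) (R⁻¹ • x)
    rw [Real.norm_of_nonneg (hFpos R x).le, mul_assoc]
    simp only [hF]
    gcongr <;> exact hM x
  have hpos : 0 < ∫ x, F 1 x := by
    rw [integral_pos_iff_support_of_nonneg (fun x => (hFpos 1 x).le) (hFi 1 one_pos)]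
    have : Function.support (F 1) = Set.univ := by
      ext x; simp [(hFpos 1 x).ne']
    rw [this]
    exact isOpen_univ.measure_pos _ Set.univ_nonempty
  have hmono : ∀ R, 1 ≤ R → ∫ x, F 1 x ≤ D * R ^ ((N : ℝ) - 2 * s * (1 + 2 * α)) := by
    intro R hR
    refine (integral_mono (hFi 1 one_pos) (hFi R (by linarith)) fun x => ?_).trans
      (hD R (by linarith))
    have hw : wt N s ((1 : ℝ)⁻¹ • x) ≤ wt N s (R⁻¹ • x) := by
      apply Real.rpow_le_rpow_of_nonpos (by positivity)
      · rw [norm_smul, norm_smul]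
        gcongr
        rw [Real.norm_of_nonneg (by positivity), Real.norm_of_nonneg (by positivity)]
        exact inv_anti₀ one_pos hR
      · have : (0 : ℝ) ≤ N := by positivity
        linarith
    simp only [hF]
    gcongr
  have hlim : Tendsto (fun R : ℝ => D * R ^ ((N : ℝ) - 2 * s * (1 + 2 * α))) atTop (nhds 0) := by
    have := (tendsto_rpow_neg_atTop (neg_pos.2 hexp)).const_mul D
    rwa [neg_neg, mul_zero] at this
  exact hpos.not_ge (ge_of_tendsto hlim ((eventually_ge_atTop 1).mono hmono))
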